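/- Fix n ≥ 2. Let F ∈ ℤ[Y,X₁,…,Xₙ] with deg_Y F ≥ 2 be a polynomial that is (1,n)-allowable but not strongly (1,n)-allowable. Then there exists an integer e(n) ≥ 1 depending only on n, and a constant C depending on n and on F, such that N(F,B) ≤ C · B^{n−1} · (log(B+2))^{e(n)} for all real B ≥ 1. -/

import Mathlib

open Polynomial

noncomputable section

/-- The rational function field `ℚ(X₁,…,Xₙ)`. -/
abbrev RF (n : ℕ) := FractionRing (MvPolynomial (Fin n) ℚ)

/-- Base change a polynomial `F ∈ ℤ[Y,X₁,…,Xₙ]` (written as a polynomial in `Y`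
with coefficients in `ℤ[X₁,…,Xₙ]`) to `ℚ[Y,X₁,…,Xₙ]`. -/
def toQ {n : ℕ} (F : Polynomial (MvPolynomial (Fin n) ℤ)) :
    Polynomial (MvPolynomial (Fin n) ℚ) :=
  F.map (MvPolynomial.map (Int.castRingHom ℚ))

/-- View a polynomial in `ℚ[X][Y]` as a polynomial in `ℚ(X)[Y]`. -/
def toFracQ {n : ℕ} (F : Polynomial (MvPolynomial (Fin n) ℚ)) : Polynomial (RF n) :=
  F.map (algebraMap (MvPolynomial (Fin n) ℚ) (RF n))

/-- View a polynomial in `ℤ[X][Y]` as a polynomial in `ℚ(X)[Y]`. -/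
def toFrac {n : ℕ} (F : Polynomial (MvPolynomial (Fin n) ℤ)) : Polynomial (RF n) :=
  toFracQ (toQ F)

/-- The degree of `F(Y,X)` in the variable `Xᵢ`. -/
def degX {n : ℕ} {R : Type*} [CommSemiring R]
    (F : Polynomial (MvPolynomial (Fin n) R)) (i : Fin n) : ℕ :=
  F.support.sup fun k => (F.coeff k).degreeOf i

/-- The total degree of `F(Y,X₁,…,Xₙ)` as a polynomial in `n+1` variables. -/
def totalDeg {n : ℕ} {R : Type*} [CommSemiring R]
    (F : Polynomial (MvPolynomial (Fin n) R)) : ℕ :=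
  F.support.sup fun k => k + (F.coeff k).totalDegree

/-- `‖g‖`: the maximum absolute value of a coefficient of `g ∈ ℤ[X₁,…,Xₙ]`. -/
def mvNorm {n : ℕ} (g : MvPolynomial (Fin n) ℤ) : ℕ :=
  g.support.sup fun m => (g.coeff m).natAbs

/-- `‖F‖`: the maximum absolute value of a coefficient of `F ∈ ℤ[Y,X₁,…,Xₙ]`. -/
def polyNorm {n : ℕ} (F : Polynomial (MvPolynomial (Fin n) ℤ)) : ℕ :=
  F.support.sup fun k => mvNorm (F.coeff k)

/-- The counting function
`N(F,B) = #{x ∈ ℤⁿ ∩ [−B,B]ⁿ : ∃ y ∈ ℤ, F(y,x) = 0}`. -/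
def NFB {n : ℕ} (F : Polynomial (MvPolynomial (Fin n) ℤ)) (B : ℝ) : ℕ :=
  Set.ncard {x : Fin n → ℤ | (∀ i, |(x i : ℝ)| ≤ B) ∧
    ∃ y : ℤ, Polynomial.eval y (F.map (MvPolynomial.eval x)) = 0}

/-- `F ∈ ℤ[Y,X₁,…,Xₙ]` is absolutely irreducible: irreducible over `ℚ̄`. -/
def AbsIrred {n : ℕ} (F : Polynomial (MvPolynomial (Fin n) ℤ)) : Prop :=
  Irreducible (F.map (MvPolynomial.map (Int.castRingHom (AlgebraicClosure ℚ))))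

/-- `G` has positive degree in `Y` and in each variable `Xᵢ`. -/
def AllPosDeg {n : ℕ} (G : Polynomial (MvPolynomial (Fin n) ℤ)) : Prop :=
  0 < G.natDegree ∧ ∀ i : Fin n, 0 < degX G i

/-- A field extension `M` of `ℚ(X₁,…,Xₙ)` is an `n`-genuine extension: every
`G ∈ ℤ[Y,X₁,…,Xₙ]` irreducible over `ℚ(X)` with `M ≅ ℚ(X)[Y]/(G)` has positive
degree in each of `Y, X₁, …, Xₙ`. -/
def IsGenuineExt (n : ℕ) (M : Type*) [Field M] [Algebra (RF n) M] : Prop :=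
  ∀ G : Polynomial (MvPolynomial (Fin n) ℤ), Irreducible (toFrac G) →
    Nonempty (AdjoinRoot (toFrac G) ≃ₐ[RF n] M) → AllPosDeg G

/-- A field extension `M` of `ℚ(X₁,…,Xₙ)` is strongly `n`-genuine: every
intermediate field strictly containing `ℚ(X)` is `n`-genuine. -/
def IsStronglyGenuineExt (n : ℕ) (M : Type*) [Field M] [Algebra (RF n) M] : Prop :=
  ∀ M' : IntermediateField (RF n) M, M' ≠ ⊥ → IsGenuineExt n M'

/-- The extension `ℚ(X)[Y]/(Fq)` presented by `Fq ∈ ℚ[X][Y]` is `n`-genuine. -/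
def GenuineExtOfQ {n : ℕ} (Fq : Polynomial (MvPolynomial (Fin n) ℚ)) : Prop :=
  ∀ G : Polynomial (MvPolynomial (Fin n) ℤ), Irreducible (toFrac G) →
    Nonempty (AdjoinRoot (toFrac G) ≃ₐ[RF n] AdjoinRoot (toFracQ Fq)) → AllPosDeg G

/-- The extension `ℚ(X)[Y]/(Fq)` presented by `Fq ∈ ℚ[X][Y]` is strongly
`n`-genuine: for any field `M` isomorphic over `ℚ(X)` to `ℚ(X)[Y]/(Fq)`, every
intermediate field strictly containing `ℚ(X)` is `n`-genuine. -/
def StronglyGenuineExtOfQ {n : ℕ} (Fq : Polynomial (MvPolynomial (Fin n) ℚ)) : Prop :=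
  ∀ (M : Type) [Field M] [Algebra (RF n) M],
    Nonempty (AdjoinRoot (toFracQ Fq) ≃ₐ[RF n] M) → IsStronglyGenuineExt n M

/-- An absolutely irreducible `F ∈ ℤ[Y,X₁,…,Xₙ]` is an `n`-genuine polynomial. -/
def IsGenuinePoly {n : ℕ} (F : Polynomial (MvPolynomial (Fin n) ℤ)) : Prop :=
  AbsIrred F ∧ GenuineExtOfQ (toQ F)

/-- An absolutely irreducible `F ∈ ℤ[Y,X₁,…,Xₙ]` is a strongly `n`-genuine polynomial. -/
def IsStronglyGenuinePoly {n : ℕ} (F : Polynomial (MvPolynomial (Fin n) ℤ)) : Prop :=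
  AbsIrred F ∧ StronglyGenuineExtOfQ (toQ F)

/-- The ring map `ℚ[X₁,…,Xₙ] → ℚ[X₁,…,Xₙ]` induced by the linear substitution
`Xᵢ ↦ Σⱼ σᵢⱼ Xⱼ`. -/
def lsubMv {n : ℕ} (σ : Matrix (Fin n) (Fin n) ℚ) :
    MvPolynomial (Fin n) ℚ →+* MvPolynomial (Fin n) ℚ :=
  (MvPolynomial.aeval (R := ℚ)
    fun i => ∑ j, MvPolynomial.C (σ i j) * MvPolynomial.X j).toRingHom

/-- `F_σ(Y,X) := F(Y,σ(X))` for a linear change of variables `σ`. -/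
def applyGL {n : ℕ} (σ : Matrix (Fin n) (Fin n) ℚ)
    (Fq : Polynomial (MvPolynomial (Fin n) ℚ)) : Polynomial (MvPolynomial (Fin n) ℚ) :=
  Fq.map (lsubMv σ)

/-- `F` is `(1,n)`-allowable: absolutely irreducible, monic in `Y`, and
`ℚ(X)[Y]/(F_σ)` is an `n`-genuine extension for every `σ ∈ GLₙ(ℚ)`. -/
def IsAllowable {n : ℕ} (F : Polynomial (MvPolynomial (Fin n) ℤ)) : Prop :=
  AbsIrred F ∧ F.Monic ∧
    ∀ σ : Matrix (Fin n) (Fin n) ℚ, IsUnit σ.det → GenuineExtOfQ (applyGL σ (toQ F))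

/-- `F` is strongly `(1,n)`-allowable: absolutely irreducible, monic in `Y`, and
`ℚ(X)[Y]/(F_σ)` is a strongly `n`-genuine extension for every `σ ∈ GLₙ(ℚ)`. -/
def IsStronglyAllowable {n : ℕ} (F : Polynomial (MvPolynomial (Fin n) ℤ)) : Prop :=
  AbsIrred F ∧ F.Monic ∧
    ∀ σ : Matrix (Fin n) (Fin n) ℚ, IsUnit σ.det → StronglyGenuineExtOfQ (applyGL σ (toQ F))

/-- `F` has the form (1.2) with parameter `m`:
`F = Y^{md} + f₁(X) Y^{m(d-1)} + ⋯ + f_{d-1}(X) Y^m + f_d(X)` with `f_d ≠ 0`. -/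
def HasForm (n m : ℕ) (F : Polynomial (MvPolynomial (Fin n) ℤ)) : Prop :=
  ∃ (d : ℕ) (f : ℕ → MvPolynomial (Fin n) ℤ), 1 ≤ d ∧ f d ≠ 0 ∧
    F = Polynomial.X ^ (m * d) +
      ∑ j ∈ Finset.Icc 1 d, Polynomial.C (f j) * Polynomial.X ^ (m * (d - j))

/-- `P` has a linear factor in `Y`: `P = (Y − Q(X))·H̃(Y,X)`. -/
def HasLinearFactorY {n : ℕ} {R : Type*} [CommRing R]
    (P : Polynomial (MvPolynomial (Fin n) R)) : Prop :=
  ∃ (Q : MvPolynomial (Fin n) R) (H : Polynomial (MvPolynomial (Fin n) R)),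
    P = (Polynomial.X - Polynomial.C Q) * H

/-- The canonical map `ℚ[X₁,…,Xₙ] → ℚ(X)[Y]/(F)`. -/
def structMap {n : ℕ} (F : Polynomial (MvPolynomial (Fin n) ℤ)) :
    MvPolynomial (Fin n) ℚ →+* AdjoinRoot (toFrac F) :=
  (algebraMap (RF n) (AdjoinRoot (toFrac F))).comp
    (algebraMap (MvPolynomial (Fin n) ℚ) (RF n))

/-- `z ∈ ℚ(X)[Y]/(F)` lies in the subfield `ℚ((Xᵢ)_{i≠j})`: it can be written
as a quotient of two polynomials not involving `Xⱼ`. -/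
def CoordMem {n : ℕ} (j : Fin n) (F : Polynomial (MvPolynomial (Fin n) ℤ))
    (z : AdjoinRoot (toFrac F)) : Prop :=
  ∃ a b : MvPolynomial (Fin n) ℚ,
    MvPolynomial.degreeOf j a = 0 ∧ MvPolynomial.degreeOf j b = 0 ∧
    structMap F b ≠ 0 ∧ z * structMap F b = structMap F a

/-- `z ∈ ℚ(X)[Y]/(F)` is algebraic over the subfield `ℚ((Xᵢ)_{i≠j})`. -/
def AlgOverCoord {n : ℕ} (j : Fin n) (F : Polynomial (MvPolynomial (Fin n) ℤ))
    (z : AdjoinRoot (toFrac F)) : Prop :=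
  ∃ P : Polynomial (AdjoinRoot (toFrac F)), P ≠ 0 ∧ (∀ k, CoordMem j F (P.coeff k)) ∧
    Polynomial.eval z P = 0

/-- Substitute `Xᵢ = xᵢ` for `i ∈ I` into `F`, over `ℚ̄`. -/
def substSome {n : ℕ} (I : Finset (Fin n)) (x : Fin n → ℚ)
    (F : Polynomial (MvPolynomial (Fin n) ℤ)) :
    Polynomial (MvPolynomial (Fin n) (AlgebraicClosure ℚ)) :=
  (toQ F).map
    ((MvPolynomial.aeval (R := ℚ) fun i =>
      if i ∈ I then MvPolynomial.C (algebraMap ℚ (AlgebraicClosure ℚ) (x i))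
      else MvPolynomial.X i).toRingHom)

/-- Substitute `Xᵢ = xᵢ` for all `i ≠ i₀` into `F`, over `ℚ̄`. -/
def substKeepFirst {n : ℕ} (i0 : Fin n) (x : {i : Fin n // i ≠ i0} → ℤ)
    (F : Polynomial (MvPolynomial (Fin n) ℤ)) :
    Polynomial (MvPolynomial (Fin n) (AlgebraicClosure ℚ)) :=
  F.map
    ((MvPolynomial.aeval (R := ℤ) fun i =>
      if h : i = i0 then (MvPolynomial.X i : MvPolynomial (Fin n) (AlgebraicClosure ℚ))
      else MvPolynomial.C ((x ⟨i, h⟩ : ℤ) : AlgebraicClosure ℚ)).toRingHom)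

/-- `‖L‖`: maximum absolute value of an entry of an integer matrix. -/
def matNorm {n : ℕ} (L : Matrix (Fin n) (Fin n) ℤ) : ℕ :=
  Finset.univ.sup fun p : Fin n × Fin n => (L p.1 p.2).natAbs

/-- The standard additive character `e_p(a) = exp(2πi a/p)` on `ZMod p`. -/
def eZp (p : ℕ) (a : ZMod p) : ℂ :=
  Complex.exp (2 * Real.pi * Complex.I * (a.val : ℂ) / (p : ℂ))

/-!
Write `M = ℚ(X)[Y]/(F_σ)` for a `σ` at which strong genuineness fails: some intermediate field
`M' ≠ ℚ(X)` of `M` is presented by a polynomial `G` that misses a variable. After an integral linear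
change of variables the missing variable is a parameter `T`, and `x` ranges over the remaining
`m = n - 1` variables. Two independent savings are then multiplied.

* An integral multiple of a root of `G` has a monic irreducible equation `g` of degree at least two
  over `ℤ[x]`. Off the zero locus of a nonzero polynomial, solvability of `F` at `(x, t)` forces
  `g(x, ·)` to have an integer root. Absolute irreducibility of `F` makes `ℚ` algebraically closed
  in `M`, so by induction on the number of variables only `O(B ^ (m - 1/2) log B)` points `x`
  remain (S. D. Cohen).
* Since `M` itself is genuine, it has no generator with minimal polynomial over `ℚ(x)`. Counting
  conjugates of the coefficients shows that `F(x, T, Y)` has no root `Y` polynomial in `T` over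
  `ℚ(x)`-bar, and by the Nullstellensatz the same holds for each `x` off a proper closed set. On
  such a fibre, pigeonhole gives an auxiliary `P(T) + Q(T) Y` vanishing modulo a large prime power
  on a residue class of integral points; Hensel's lemma and size considerations turn this into the
  bound `O(√B log B)`.

The product of the two bounds is `O(B ^ m (log B) ^ 2)`.
-/

/-! ### The determinant method on a plane curve -/

lemma dvd_evalEval_sub_evalEval {R : Type*} [CommRing R] (f : R[X][X]) {p s t x y : R}
    (hst : p ∣ t - s) (hxy : p ∣ y - x) : p ∣ evalEval t y f - evalEval s x f := by
  have hy : p ∣ evalEval t y f - evalEval t x f := by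
    simpa only [map_evalRingHom_eval] using
      hxy.trans (sub_dvd_eval_sub y x (f.map (evalRingHom t)))
  have ht : p ∣ evalEval t x f - evalEval s x f :=
    hst.trans (sub_dvd_eval_sub t s (f.eval (C x)))
  simpa using dvd_add hy ht

/-- Hensel's lemma, uniformly in `t`: the approximate root `g` is a polynomial in `t`. -/
lemma exists_polynomial_pow_dvd_sub_eval {R : Type*} [CommRing R] (f : R[X][X]) {p t₀ y₀ : R}
    (h : IsCoprime p (evalEval t₀ y₀ (derivative f))) (m : ℕ) :
    ∃ g : R[X], ∀ t y, p ∣ t - t₀ → p ∣ y - y₀ → evalEval t y f = 0 →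
      p ^ (m + 1) ∣ y - g.eval t := by
  obtain ⟨u, a, hua⟩ := h
  induction m with
  | zero => exact ⟨C y₀, fun t y _ hy _ => by simpa using hy⟩
  | succ m ih =>
    obtain ⟨g, hg⟩ := ih
    refine ⟨g - C a * f.eval g, fun t y ht hy hf => ?_⟩
    have hw := hg t y ht hy hf
    set w := y - g.eval t with hw_def
    obtain ⟨k, hk⟩ : ∃ k, (f.eval g).eval t = -evalEval t y (derivative f) * w + k * w ^ 2 := by
      have hgraph : (f.eval g).eval t = (f.map (evalRingHom t)).eval (y + -w) := by
        rw [hw_def, neg_sub, add_sub_cancel, ← coe_evalRingHom, eval_map_apply]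
      obtain ⟨k, hk⟩ := (f.map (evalRingHom t)).binomExpansion y (-w)
      rw [derivative_map, ← hgraph, map_evalRingHom_eval, map_evalRingHom_eval, hf] at hk
      exact ⟨k, by rw [hk]; ring⟩
    have hfactor : y - (g - C a * f.eval g).eval t =
        w * (u * p - a * (evalEval t y (derivative f) - evalEval t₀ y₀ (derivative f))
          + a * k * w) := by
      simp only [eval_sub, eval_mul, eval_C, hk]
      linear_combination hw_def.symm - w * hua
    rw [hfactor, pow_succ]
    have hpw : p ∣ w := (dvd_pow_self p m.succ_ne_zero).trans hw
    exact mul_dvd_mul hw (dvd_add (dvd_sub (dvd_mul_left p u)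
      ((dvd_evalEval_sub_evalEval _ ht hy).mul_left a)) (hpw.mul_left _))

lemma pow_dvd_eval_of_pow_dvd_coeff_taylor {R : Type*} [CommRing R] {W : R[X]} {p s t : R} {m : ℕ}
    (ht : p ∣ t - s) (h : ∀ l < m, p ^ (m - l) ∣ (taylor s W).coeff l) : p ^ m ∣ W.eval t := by
  have hW : W.eval t = (taylor s W).eval (t - s) := by rw [taylor_eval, sub_add_cancel]
  rw [hW, eval_eq_sum]
  refine Finset.dvd_sum fun l _ => ?_
  rcases lt_or_ge l m with hl | hl
  · simpa [← pow_add, Nat.sub_add_cancel hl.le] using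
      mul_dvd_mul (h l hl) (pow_dvd_pow_of_dvd ht l)
  · exact ((pow_dvd_pow p hl).trans (pow_dvd_pow_of_dvd ht l)).mul_left _

lemma exists_ne_zero_abs_le_map_eq_zero {ι G : Type*} [Fintype ι] [AddCommGroup G] [Finite G]
    (Φ : (ι → ℤ) →+ G) (h : ι → ℕ) (hcard : Nat.card G < ∏ i, (h i + 1)) :
    ∃ u : ι → ℤ, u ≠ 0 ∧ (∀ i, |u i| ≤ h i) ∧ Φ u = 0 := by
  classical
  have := Fintype.ofFinite G
  let toInt : (∀ i, Fin (h i + 1)) → ι → ℤ := fun v i => (v i : ℕ)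
  obtain ⟨v, w, hvw, hΦ⟩ := Fintype.exists_ne_map_eq_of_card_lt (fun v => Φ (toInt v))
    (by simpa [Fintype.card_pi, Nat.card_eq_fintype_card] using hcard)
  refine ⟨toInt v - toInt w, fun h0 => hvw ?_, fun i => ?_, ?_⟩
  · funext i
    have := congrFun h0 i
    simp only [Pi.sub_apply, Pi.zero_apply, toInt] at this
    exact Fin.ext (by omega)
  · have := (v i).is_lt
    have := (w i).is_lt
    simp only [Pi.sub_apply, toInt]
    rw [abs_le]
    constructor <;> omega
  · rw [map_sub, sub_eq_zero]
    exact hΦ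

/-- The sizes allowed for the coefficients of `P` (left) and `Q` (right) in an auxiliary polynomial
`P(T) + Q(T) Y` with `deg P, deg Q < A`, so that each of its `2 A` terms is at most `H` in absolute
value when `|t| ≤ B` and `|y| ≤ E`. -/
def coeffBound (A B E H : ℕ) : Fin A ⊕ Fin A → ℕ :=
  Sum.elim (fun a => H / B ^ (a : ℕ)) (fun a => H / (B ^ (a : ℕ) * E))

lemma abs_eval_add_eval_mul_le {A B E H : ℕ} {u : Fin A ⊕ Fin A → ℤ}
    (hu : ∀ i, |u i| ≤ coeffBound A B E H i) {t y : ℤ} (ht : |t| ≤ B) (hy : |y| ≤ E) :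
    |(ofFn A (u ∘ Sum.inl)).eval t + (ofFn A (u ∘ Sum.inr)).eval t * y| ≤ 2 * A * H := by
  have hP : |(ofFn A (u ∘ Sum.inl)).eval t| ≤ A * H := by
    rw [ofFn_eq_sum_monomial, eval_finsetSum]
    refine (Finset.abs_sum_le_sum_abs _ _).trans
      ((Finset.sum_le_card_nsmul _ _ (H : ℤ) fun a _ => ?_).trans (by simp))
    have hle : H / B ^ (a : ℕ) * B ^ (a : ℕ) ≤ H := Nat.div_mul_le_self _ _
    calc |eval t (monomial (a : ℕ) ((u ∘ Sum.inl) a))| = |u (.inl a)| * |t| ^ (a : ℕ) := by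
          simp [abs_mul, abs_pow]
      _ ≤ (H / B ^ (a : ℕ) : ℕ) * (B : ℤ) ^ (a : ℕ) := by gcongr; exact hu (.inl a)
      _ ≤ H := by exact_mod_cast hle
  have hQ : |(ofFn A (u ∘ Sum.inr)).eval t * y| ≤ A * H := by
    rw [ofFn_eq_sum_monomial, eval_finsetSum, Finset.sum_mul]
    refine (Finset.abs_sum_le_sum_abs _ _).trans
      ((Finset.sum_le_card_nsmul _ _ (H : ℤ) fun a _ => ?_).trans (by simp))
    have hle : H / (B ^ (a : ℕ) * E) * (B ^ (a : ℕ) * E) ≤ H := Nat.div_mul_le_self _ _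
    calc |eval t (monomial (a : ℕ) ((u ∘ Sum.inr) a)) * y|
        = |u (.inr a)| * (|t| ^ (a : ℕ) * |y|) := by simp [abs_mul, abs_pow, mul_assoc]
      _ ≤ (H / (B ^ (a : ℕ) * E) : ℕ) * ((B : ℤ) ^ (a : ℕ) * E) := by
          gcongr; exact hu (.inr a)
      _ ≤ H := by exact_mod_cast hle
  calc _ ≤ _ := abs_add_le _ _
    _ ≤ _ := add_le_add hP hQ
    _ = _ := by ring

lemma pow_le_prod_coeffBound_add_one_mul {A B E H N : ℕ} (hB : 1 ≤ B) (hE : 1 ≤ E)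
    (hN : N ≤ 2 * A * (H + 1)) :
    N ^ (2 * A) ≤
      (∏ i, (coeffBound A B E H i + 1)) * (B ^ (A * (A - 1)) * (4 * A ^ 2 * E) ^ A) := by
  have hfloor (x : ℕ) (hx : 0 < x) : N ≤ (H / x + 1) * (2 * A * x) := by
    have hlt : H < x * (H / x + 1) := Nat.lt_mul_div_succ _ hx
    calc N ≤ 2 * A * (H + 1) := hN
      _ ≤ 2 * A * (x * (H / x + 1)) := by gcongr; omega
      _ = _ := by ring
  have hBpow (a : Fin A) : 0 < B ^ (a : ℕ) := Nat.pow_pos hB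
  have hsum : ∑ a : Fin A, (a : ℕ) * 2 = A * (A - 1) := by
    rw [Fin.sum_univ_eq_sum_range (fun a => a * 2), ← Finset.sum_mul, Finset.sum_range_id_mul_two]
  calc N ^ (2 * A) = ∏ _a : Fin A, N * N := by simp [two_mul, pow_add, mul_pow]
    _ ≤ ∏ a : Fin A, (H / B ^ (a : ℕ) + 1) * (2 * A * B ^ (a : ℕ)) *
          ((H / (B ^ (a : ℕ) * E) + 1) * (2 * A * (B ^ (a : ℕ) * E))) :=
        Finset.prod_le_prod' fun a _ =>
          Nat.mul_le_mul (hfloor _ (hBpow a)) (hfloor _ (Nat.mul_pos (hBpow a) hE))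
    _ = (∏ a : Fin A, (H / B ^ (a : ℕ) + 1) * (H / (B ^ (a : ℕ) * E) + 1)) *
          ∏ a : Fin A, B ^ ((a : ℕ) * 2) * (4 * A ^ 2 * E) := by
        rw [← Finset.prod_mul_distrib]
        exact Finset.prod_congr rfl fun a _ => by ring
    _ = _ := by
        rw [Finset.prod_mul_distrib, Finset.prod_mul_distrib, Finset.prod_pow_eq_pow_sum, hsum]
        simp [coeffBound, Fintype.prod_sum_type]

lemma prod_pow_sub_eq_pow (p A : ℕ) :
    ∏ l : Fin (2 * A), p ^ (2 * A - (l : ℕ)) = p ^ (A * (2 * A + 1)) := by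
  rw [Finset.prod_pow_eq_pow_sum, Fin.sum_univ_eq_sum_range (fun l => 2 * A - l)]
  congr 1
  have hgauss (n : ℕ) : 2 * ∑ l ∈ Finset.range n, (n - l) = n * (n + 1) := by
    induction n with
    | zero => simp
    | succ n ih =>
      simp only [Finset.sum_range_succ', Nat.add_sub_add_right, Nat.sub_zero, mul_add, ih]
      ring
  linarith [hgauss (2 * A)]

lemma prod_pow_sub_lt_prod_coeffBound_add_one {p A B E : ℕ} (hp : 1 < p) (hA : 1 ≤ A)
    (hB : 1 ≤ B) (hE : 1 ≤ E) (hpB : 4 * B ≤ p ^ 2) (hAE : 4 * A ^ 2 * E ≤ 4 ^ (A - 1)) :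
    ∏ l : Fin (2 * A), p ^ (2 * A - (l : ℕ)) <
      ∏ i, (coeffBound A B E ((p ^ (2 * A) - 1) / (2 * A)) i + 1) := by
  set H := (p ^ (2 * A) - 1) / (2 * A)
  have hH : p ^ (2 * A) ≤ 2 * A * (H + 1) := by
    have : p ^ (2 * A) - 1 < 2 * A * (H + 1) := Nat.lt_mul_div_succ _ (by omega)
    omega
  have hD : B ^ (A * (A - 1)) * (4 * A ^ 2 * E) ^ A ≤ p ^ (2 * (A * (A - 1))) :=
    calc B ^ (A * (A - 1)) * (4 * A ^ 2 * E) ^ A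
        ≤ B ^ (A * (A - 1)) * (4 ^ (A - 1)) ^ A := by gcongr
      _ = (4 * B) ^ (A * (A - 1)) := by rw [mul_pow, ← pow_mul, mul_comm (A - 1)]; ring
      _ ≤ (p ^ 2) ^ (A * (A - 1)) := by gcongr
      _ = _ := (pow_mul _ _ _).symm
  have hexp : A * (2 * A + 1) + A + 2 * (A * (A - 1)) = 2 * A * (2 * A) := by
    obtain ⟨a, rfl⟩ := Nat.exists_eq_add_of_le' hA
    rw [Nat.add_sub_cancel]
    ring
  have hle : p ^ (A * (2 * A + 1) + A) ≤ ∏ i, (coeffBound A B E H i + 1) := by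
    refine Nat.le_of_mul_le_mul_right ?_ (pow_pos (zero_lt_one.trans hp) (2 * (A * (A - 1))))
    calc p ^ (A * (2 * A + 1) + A) * p ^ (2 * (A * (A - 1))) = (p ^ (2 * A)) ^ (2 * A) := by
          rw [← pow_add, hexp, pow_mul]
      _ ≤ _ := pow_le_prod_coeffBound_add_one_mul hB hE hH
      _ ≤ _ := Nat.mul_le_mul_left _ hD
  rw [prod_pow_sub_eq_pow]
  exact (Nat.pow_lt_pow_right hp (by omega)).trans_le hle

lemma exists_ne_zero_pow_dvd_coeff_taylor {p A B E : ℕ} (hp : 1 < p) (hA : 1 ≤ A)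
    (hB : 1 ≤ B) (hE : 1 ≤ E) (hpB : 4 * B ≤ p ^ 2) (hAE : 4 * A ^ 2 * E ≤ 4 ^ (A - 1))
    (g : ℤ[X]) (t₀ : ℤ) :
    ∃ u : Fin A ⊕ Fin A → ℤ, u ≠ 0 ∧
      (∀ i, |u i| ≤ coeffBound A B E ((p ^ (2 * A) - 1) / (2 * A)) i) ∧
      ∀ l < 2 * A, (p : ℤ) ^ (2 * A - l) ∣
        (taylor t₀ (ofFn A (u ∘ Sum.inl) + ofFn A (u ∘ Sum.inr) * g)).coeff l := by
  have (l : Fin (2 * A)) : NeZero (p ^ (2 * A - (l : ℕ))) := ⟨(pow_pos (by omega) _).ne'⟩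
  let Φ : (Fin A ⊕ Fin A → ℤ) →+ ((l : Fin (2 * A)) → ZMod (p ^ (2 * A - (l : ℕ)))) :=
    AddMonoidHom.mk' (fun u l =>
      ((taylor t₀ (ofFn A (u ∘ Sum.inl) + ofFn A (u ∘ Sum.inr) * g)).coeff l : ℤ)) fun u v => by
        funext l
        have hadd (j : Fin A → Fin A ⊕ Fin A) : (u + v) ∘ j = u ∘ j + v ∘ j := rfl
        simp only [hadd, map_add, add_mul, coeff_add, Pi.add_apply, Int.cast_add]
        ring
  obtain ⟨u, hu0, hu, hΦ⟩ := exists_ne_zero_abs_le_map_eq_zero Φ (coeffBound A B E _) (by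
    simpa [Nat.card_pi] using prod_pow_sub_lt_prod_coeffBound_add_one hp hA hB hE hpB hAE)
  exact ⟨u, hu0, hu, fun l hl => by
    exact_mod_cast (ZMod.intCast_zmod_eq_zero_iff_dvd _ _).1 (congrFun hΦ ⟨l, hl⟩)⟩

/-- The pigeonhole principle replaces the vanishing determinant of the `p`-adic determinant
method: the Taylor conditions at `t₀` make `P(T) + Q(T) Y` divisible by `p ^ (2 * A)` at the points
considered, and their number of residues is smaller than the number of admissible `(P, Q)`. -/
lemma exists_auxiliary_polynomials {p A B E : ℕ} (hp : 1 < p) (hA : 1 ≤ A)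
    (hB : 1 ≤ B) (hE : 1 ≤ E) (hpB : 4 * B ≤ p ^ 2) (hAE : 4 * A ^ 2 * E ≤ 4 ^ (A - 1))
    (g : ℤ[X]) (t₀ : ℤ) :
    ∃ P Q : ℤ[X], (P ≠ 0 ∨ Q ≠ 0) ∧ P.natDegree < A ∧ Q.natDegree < A ∧
      ∀ t y : ℤ, |t| ≤ B → |y| ≤ E → (p : ℤ) ∣ t - t₀ → (p : ℤ) ^ (2 * A) ∣ y - g.eval t →
        P.eval t + Q.eval t * y = 0 := by
  obtain ⟨u, hu0, hu, hΦ⟩ := exists_ne_zero_pow_dvd_coeff_taylor hp hA hB hE hpB hAE g t₀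
  refine ⟨ofFn A (u ∘ Sum.inl), ofFn A (u ∘ Sum.inr), ?_, ofFn_natDegree_lt hA _,
    ofFn_natDegree_lt hA _, fun t y ht hy htp hyp => ?_⟩
  · by_contra! h0
    refine hu0 (funext fun i => ?_)
    have hzero (v : Fin A → ℤ) (hv : ofFn A v = 0) : v = 0 :=
      injective_ofFn A (hv.trans (map_zero _).symm)
    rcases i with a | a
    · exact congrFun (hzero _ h0.1) a
    · exact congrFun (hzero _ h0.2) a
  · set P := ofFn A (u ∘ Sum.inl)
    set Q := ofFn A (u ∘ Sum.inr)
    have hgraph : (p : ℤ) ^ (2 * A) ∣ (P + Q * g).eval t :=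
      pow_dvd_eval_of_pow_dvd_coeff_taylor htp hΦ
    have hdvd : (p : ℤ) ^ (2 * A) ∣ P.eval t + Q.eval t * y := by
      have hsplit : P.eval t + Q.eval t * y =
          (P + Q * g).eval t + Q.eval t * (y - g.eval t) := by
        rw [eval_add, eval_mul]
        ring
      exact hsplit ▸ dvd_add hgraph (hyp.mul_left _)
    refine Int.eq_zero_of_abs_lt_dvd hdvd ((abs_eval_add_eval_mul_le hu ht hy).trans_lt ?_)
    exact_mod_cast (Nat.mul_div_le _ _).trans_lt (Nat.sub_one_lt (pow_pos (by omega) _).ne')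

lemma exists_eval_eq_zero_of_eval_scaleRoots_eq_zero {R : Type*} [CommRing R] [IsDomain R]
    [IsIntegrallyClosed R] {f : R[X]} (hf : f.Monic) {a b : R} (hb : b ≠ 0)
    (h : (f.scaleRoots b).eval a = 0) : ∃ r, f.eval r = 0 := by
  let K := FractionRing R
  have hb' : algebraMap R K b ≠ 0 := by simpa using hb
  have hroot : aeval (algebraMap R K a / algebraMap R K b) f = 0 := by
    have hscale := scaleRoots_eval₂_mul (p := f) (algebraMap R K)
      (algebraMap R K a / algebraMap R K b) b
    rw [mul_div_cancel₀ _ hb', eval₂_at_apply, h, map_zero] at hscale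
    exact (mul_eq_zero.1 hscale.symm).resolve_left (pow_ne_zero _ hb')
  obtain ⟨r, hr⟩ := IsIntegrallyClosed.algebraMap_eq_of_integral
    (x := algebraMap R K a / algebraMap R K b) ⟨f, hf, hroot⟩
  rw [← hr, aeval_algebraMap_apply_eq_algebraMap_eval] at hroot
  exact ⟨r, by simpa using hroot⟩

lemma eval_eval_scaleRoots_eq_zero {R : Type*} [CommRing R] [Nontrivial R] {f : R[X][X]}
    (hf : f.Monic) {P Q : R[X]} {t y : R} (h : P.eval t + Q.eval t * y = 0)
    (hfy : evalEval t y f = 0) : ((f.scaleRoots Q).eval (-P)).eval t = 0 := by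
  have hP : evalRingHom t (-P) = y * Q.eval t := by
    rw [coe_evalRingHom, eval_neg]
    linear_combination -h
  rw [← coe_evalRingHom, ← eval_map_apply, map_scaleRoots _ _ _ (by simp [hf.leadingCoeff]), hP,
    coe_evalRingHom, mul_comm, scaleRoots_eval_mul, map_evalRingHom_eval, hfy, mul_zero]

lemma natDegree_eval_scaleRoots_le {R : Type*} [CommRing R] (f : R[X][X]) {P Q : R[X]} {k A : ℕ}
    (hk : ∀ j, (f.coeff j).natDegree ≤ k) (hP : P.natDegree ≤ A) (hQ : Q.natDegree ≤ A) :
    ((f.scaleRoots Q).eval P).natDegree ≤ k + A * f.natDegree := by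
  rw [eval_eq_sum_range, natDegree_scaleRoots]
  refine natDegree_sum_le_of_forall_le _ _ fun j hj => ?_
  have hj : j ≤ f.natDegree := Nat.lt_succ_iff.1 (Finset.mem_range.1 hj)
  rw [coeff_scaleRoots]
  calc _ ≤ k + (f.natDegree - j) * A + j * A :=
        natDegree_mul_le_of_le (natDegree_mul_le_of_le (hk j) (natDegree_pow_le_of_le _ hQ))
          (natDegree_pow_le_of_le j hP)
    _ = k + A * f.natDegree := by
        rw [add_assoc, ← add_mul, Nat.sub_add_cancel hj, mul_comm]

lemma card_le_natDegree_of_forall_eval_eq_zero {R : Type*} [CommRing R] [IsDomain R] {P : R[X]}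
    (hP : P ≠ 0) {s : Finset R} (hs : ∀ t ∈ s, P.eval t = 0) : s.card ≤ P.natDegree :=
  card_le_degree_of_subset_roots fun t ht => (mem_roots hP).2 (hs t ht)

lemma card_image_fst_le_of_residue_class {f : ℤ[X][X]} (hf : f.Monic)
    (hroot : ∀ g : ℤ[X], f.eval g ≠ 0) {k p A B E : ℕ} (hk : ∀ j, (f.coeff j).natDegree ≤ k)
    (hp : p.Prime) (hA : 1 ≤ A) (hB : 1 ≤ B) (hE : 1 ≤ E) (hpB : 4 * B ≤ p ^ 2)
    (hAE : 4 * A ^ 2 * E ≤ 4 ^ (A - 1)) {t₀ y₀ : ℤ}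
    (h₀ : ¬ (p : ℤ) ∣ evalEval t₀ y₀ (derivative f)) {S : Finset (ℤ × ℤ)}
    (hS : ∀ z ∈ S, |z.1| ≤ B ∧ |z.2| ≤ E ∧ evalEval z.1 z.2 f = 0)
    (hSp : ∀ z ∈ S, (p : ℤ) ∣ z.1 - t₀ ∧ (p : ℤ) ∣ z.2 - y₀) :
    (S.image Prod.fst).card ≤ k + A * f.natDegree + A := by
  obtain ⟨g, hg⟩ := exists_polynomial_pow_dvd_sub_eval f
    ((Prime.coprime_iff_not_dvd (Nat.prime_iff_prime_int.1 hp)).2 h₀) (2 * A)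
  obtain ⟨P, Q, hPQ, hP, hQ, haux⟩ :=
    exists_auxiliary_polynomials hp.one_lt hA hB hE hpB hAE g t₀
  have hvanish : ∀ z ∈ S, P.eval z.1 + Q.eval z.1 * z.2 = 0 := fun z hz => by
    obtain ⟨ht, hy, hfz⟩ := hS z hz
    obtain ⟨htp, hyp⟩ := hSp z hz
    exact haux _ _ ht hy htp ((pow_dvd_pow _ (Nat.le_succ _)).trans (hg _ _ htp hyp hfz))
  rcases eq_or_ne Q 0 with rfl | hQ0
  · refine (card_le_natDegree_of_forall_eval_eq_zero (P := P) (by simpa using hPQ) ?_).trans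
      (hP.le.trans (Nat.le_add_left _ _))
    exact Finset.forall_mem_image.2 fun z hz => by simpa using hvanish z hz
  · have hR : (f.scaleRoots Q).eval (-P) ≠ 0 := fun h => by
      obtain ⟨r, hr⟩ := exists_eval_eq_zero_of_eval_scaleRoots_eq_zero hf hQ0 h
      exact hroot r hr
    refine (card_le_natDegree_of_forall_eval_eq_zero hR ?_).trans
      ((natDegree_eval_scaleRoots_le f hk ?_ hQ.le).trans (Nat.le_add_right _ _))
    · exact Finset.forall_mem_image.2 fun z hz =>
        eval_eval_scaleRoots_eq_zero hf (hvanish z hz) (hS z hz).2.2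
    · rw [natDegree_neg]
      exact hP.le

lemma card_zeros_le {k : Type*} [CommRing k] [IsDomain k] [Fintype k] {f : k[X][X]} (hf : f.Monic)
    {T : Finset (k × k)} (hT : ∀ w ∈ T, evalEval w.1 w.2 f = 0) :
    T.card ≤ Fintype.card k * f.natDegree := by
  classical
  rw [Finset.card_eq_sum_card_fiberwise (t := Finset.univ) fun w _ => Finset.mem_univ w.1,
    ← smul_eq_mul, ← Finset.card_univ]
  refine Finset.sum_le_card_nsmul _ _ _ fun t _ => ?_
  have hmonic : (f.map (evalRingHom t)).Monic := hf.map _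
  rw [← Finset.card_image_of_injOn (f := Prod.snd), ← hf.natDegree_map (evalRingHom t)]
  · refine card_le_natDegree_of_forall_eval_eq_zero hmonic.ne_zero
      (Finset.forall_mem_image.2 fun w hw => ?_)
    obtain ⟨hwT, rfl⟩ := Finset.mem_filter.1 hw
    rw [map_evalRingHom_eval, hT w hwT]
  · intro w hw w' hw' h
    exact Prod.ext ((Finset.mem_filter.1 hw).2.trans (Finset.mem_filter.1 hw').2.symm) h

lemma card_image_fst_le_of_prime {f : ℤ[X][X]} (hf : f.Monic)
    (hroot : ∀ g : ℤ[X], f.eval g ≠ 0) {k p A B E : ℕ} (hk : ∀ j, (f.coeff j).natDegree ≤ k)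
    (hp : p.Prime) (hA : 1 ≤ A) (hB : 1 ≤ B) (hE : 1 ≤ E) (hpB : 4 * B ≤ p ^ 2)
    (hAE : 4 * A ^ 2 * E ≤ 4 ^ (A - 1)) {S : Finset (ℤ × ℤ)}
    (hS : ∀ z ∈ S, |z.1| ≤ B ∧ |z.2| ≤ E ∧ evalEval z.1 z.2 f = 0)
    (hSp : ∀ z ∈ S, ¬ (p : ℤ) ∣ evalEval z.1 z.2 (derivative f)) :
    (S.image Prod.fst).card ≤ p * f.natDegree * (k + A * f.natDegree + A) := by
  classical
  have : Fact p.Prime := ⟨hp⟩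
  let residue : ℤ × ℤ → ZMod p × ZMod p := fun z => (z.1, z.2)
  have hcover : S.image Prod.fst ⊆
      (S.image residue).biUnion fun w => {z ∈ S | residue z = w}.image Prod.fst :=
    Finset.image_subset_iff.2 fun z hz => Finset.mem_biUnion.2 ⟨residue z,
      Finset.mem_image_of_mem _ hz, Finset.mem_image_of_mem _ (Finset.mem_filter.2 ⟨hz, rfl⟩)⟩
  have hclasses : (S.image residue).card ≤ p * f.natDegree := by
    have hmod := card_zeros_le (hf.map (mapRingHom (Int.castRingHom (ZMod p))))
      (T := S.image residue) (Finset.forall_mem_image.2 fun z hz => by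
        simpa [(hS z hz).2.2] using
          map_mapRingHom_evalEval (Int.castRingHom (ZMod p)) f z.1 z.2)
    rwa [ZMod.card, hf.natDegree_map] at hmod
  refine (Finset.card_le_card hcover).trans
    ((Finset.card_biUnion_le_card_mul _ _ _ fun w hw => ?_).trans
      (Nat.mul_le_mul_right _ hclasses))
  obtain ⟨z₀, hz₀, rfl⟩ := Finset.mem_image.1 hw
  refine card_image_fst_le_of_residue_class hf hroot hk hp hA hB hE hpB hAE (hSp z₀ hz₀)
    (fun z hz => hS z (Finset.mem_filter.1 hz).1) fun z hz => ?_
  obtain ⟨h₁, h₂⟩ := Prod.mk.inj (Finset.mem_filter.1 hz).2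
  exact ⟨(ZMod.intCast_eq_intCast_iff_dvd_sub _ _ _).1 h₁.symm,
    (ZMod.intCast_eq_intCast_iff_dvd_sub _ _ _).1 h₂.symm⟩

lemma exists_finset_primes_le {N : ℕ} (hN : 1 ≤ N) (r : ℕ) :
    ∃ s : Finset ℕ, s.card = r ∧ ∀ p ∈ s, p.Prime ∧ N < p ∧ p ≤ 2 ^ r * N := by
  induction r with
  | zero => exact ⟨∅, by simp⟩
  | succ r ih =>
    obtain ⟨s, hs, h⟩ := ih
    obtain ⟨p, hp, hlt, hle⟩ := Nat.exists_prime_lt_and_le_two_mul (2 ^ r * N) (by positivity)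
    have hps : p ∉ s := fun hps => absurd (h p hps).2.2 hlt.not_ge
    refine ⟨insert p s, by rw [Finset.card_insert_of_notMem hps, hs], fun q hq => ?_⟩
    have hpow : 2 ^ (r + 1) * N = 2 * (2 ^ r * N) := by ring
    rcases Finset.mem_insert.1 hq with rfl | hq
    · exact ⟨hp, (Nat.le_mul_of_pos_left N (by positivity)).trans_lt hlt, by omega⟩
    · obtain ⟨hq, hNq, hqN⟩ := h q hq
      exact ⟨hq, hNq, by omega⟩

lemma exists_mem_not_dvd_of_abs_le {s : Finset ℕ} {N : ℕ} (hs : s.Nonempty)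
    (hprime : ∀ p ∈ s, p.Prime ∧ N < p) {w : ℤ} (hw0 : w ≠ 0) (hw : |w| ≤ (N ^ s.card : ℕ)) :
    ∃ p ∈ s, ¬ (p : ℤ) ∣ w := by
  by_contra! hdvd
  have hprod : ∏ p ∈ s, p ∣ w.natAbs := Finset.prod_primes_dvd _
    (fun p hp => Nat.prime_iff.1 (hprime p hp).1) fun p hp => Int.natCast_dvd.1 (hdvd p hp)
  have hle : ∏ p ∈ s, p ≤ N ^ s.card := by
    refine (Nat.le_of_dvd (Int.natAbs_pos.2 hw0) hprod).trans ?_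
    rw [Int.abs_eq_natAbs] at hw
    exact_mod_cast hw
  have hlt : N ^ s.card < (N + 1) ^ s.card := Nat.pow_lt_pow_left N.lt_succ_self hs.card_pos.ne'
  exact absurd hle (hlt.trans_le (Finset.pow_card_le_prod s _ _ fun p hp => (hprime p hp).2)).not_ge

lemma card_image_fst_le_of_sqrt_lt {f : ℤ[X][X]} (hf : f.Monic)
    (hroot : ∀ g : ℤ[X], f.eval g ≠ 0) {k N c A B : ℕ} (hk : ∀ j, (f.coeff j).natDegree ≤ k)
    (hA : 1 ≤ A) (hB : 1 ≤ B) (hc : 1 ≤ c) (hNB : 4 * B ≤ N ^ 2) (hNB' : B + 2 ≤ N ^ 2)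
    (hAB : 4 * A ^ 2 * (B + 2) ^ c ≤ 4 ^ (A - 1)) {S : Finset (ℤ × ℤ)}
    (hS : ∀ z ∈ S, |z.1| ≤ B ∧ |z.2| ≤ ((B + 2) ^ c : ℕ) ∧ evalEval z.1 z.2 f = 0)
    (hS' : ∀ z ∈ S, evalEval z.1 z.2 (derivative f) ≠ 0 ∧
      |evalEval z.1 z.2 (derivative f)| ≤ ((B + 2) ^ c : ℕ)) :
    (S.image Prod.fst).card ≤
      2 * c * (2 ^ (2 * c) * N * f.natDegree * (k + A * f.natDegree + A)) := by
  classical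
  have hN : 1 ≤ N := Nat.one_le_iff_ne_zero.2 fun h => by simp [h] at hNB'
  obtain ⟨s, hs, hprime⟩ := exists_finset_primes_le hN (2 * c)
  have hcover : S.image Prod.fst ⊆ s.biUnion fun p =>
      {z ∈ S | ¬ (p : ℤ) ∣ evalEval z.1 z.2 (derivative f)}.image Prod.fst := by
    refine Finset.image_subset_iff.2 fun z hz => ?_
    obtain ⟨h0, hle⟩ := hS' z hz
    have hpow : (B + 2) ^ c ≤ N ^ s.card := by
      rw [hs, pow_mul]
      gcongr
    obtain ⟨p, hps, hpz⟩ := exists_mem_not_dvd_of_abs_le (Finset.card_pos.1 (by omega))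
      (fun p hp => ⟨(hprime p hp).1, (hprime p hp).2.1⟩) h0
      (hle.trans (by exact_mod_cast hpow))
    exact Finset.mem_biUnion.2
      ⟨p, hps, Finset.mem_image_of_mem _ (Finset.mem_filter.2 ⟨hz, hpz⟩)⟩
  rw [← hs]
  refine (Finset.card_le_card hcover).trans
    (Finset.card_biUnion_le_card_mul _ _ _ fun p hps => ?_)
  obtain ⟨hp, hNp, hpN⟩ := hprime p hps
  have hpB : 4 * B ≤ p ^ 2 := hNB.trans (by gcongr)
  refine (card_image_fst_le_of_prime hf hroot hk hp hA hB (Nat.one_le_pow _ _ (by omega)) hpB hAB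
    (fun z hz => hS z (Finset.mem_filter.1 hz).1) fun z hz => (Finset.mem_filter.1 hz).2).trans ?_
  rw [hs]
  gcongr

lemma sq_le_two_pow_succ (A : ℕ) : A ^ 2 ≤ 2 ^ (A + 1) := by
  rcases lt_or_ge A 4 with h | h
  · interval_cases A <;> norm_num
  · induction A, h using Nat.le_induction with
    | base => norm_num
    | succ a ha ih =>
      rw [pow_succ 2]
      nlinarith

lemma one_le_log_add_two {B : ℝ} (hB : 1 ≤ B) : 1 ≤ Real.log (B + 2) := by
  rw [Real.le_log_iff_exp_le (by positivity)]
  linarith [Real.exp_one_lt_d9]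

lemma clog_le_three_mul_log {B : ℕ} (hB : 1 ≤ B) :
    (Nat.clog 2 (B + 2) : ℝ) ≤ 3 * Real.log (B + 2) := by
  have hlt : (2 : ℝ) ^ (Nat.clog 2 (B + 2) - 1) < (B : ℝ) + 2 := by
    exact_mod_cast Nat.pow_pred_clog_lt_self (b := 2) (by norm_num) (show 1 < B + 2 by omega)
  have hlog := Real.log_lt_log (by positivity) hlt
  rw [Real.log_pow] at hlog
  have hpred : (Nat.clog 2 (B + 2) : ℝ) ≤ ((Nat.clog 2 (B + 2) - 1 : ℕ) : ℝ) + 1 := by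
    exact_mod_cast Nat.le_add_of_sub_le le_rfl
  have hL := one_le_log_add_two (show (1 : ℝ) ≤ B by exact_mod_cast hB)
  nlinarith [Real.log_two_gt_d9]

lemma four_mul_sq_mul_pow_le {c B A : ℕ} (hA : c * Nat.clog 2 (B + 2) + 5 ≤ A) :
    4 * A ^ 2 * (B + 2) ^ c ≤ 4 ^ (A - 1) :=
  calc 4 * A ^ 2 * (B + 2) ^ c ≤ 2 ^ 2 * 2 ^ (A + 1) * (2 ^ Nat.clog 2 (B + 2)) ^ c :=
        Nat.mul_le_mul (Nat.mul_le_mul_left _ (sq_le_two_pow_succ A))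
          (Nat.pow_le_pow_left (Nat.le_pow_clog one_lt_two _) c)
    _ = 2 ^ (2 + (A + 1) + Nat.clog 2 (B + 2) * c) := by rw [← pow_mul, ← pow_add, ← pow_add]
    _ ≤ 2 ^ (2 * (A - 1)) := Nat.pow_le_pow_right (by norm_num) (by rw [mul_comm _ c]; omega)
    _ = 4 ^ (A - 1) := by rw [pow_mul]; norm_num

/-- A uniform bound in the style of Bombieri and Pila. -/
lemma exists_card_image_fst_le_sqrt_mul_log (D k : ℕ) {c : ℕ} (hc : 1 ≤ c) :
    ∃ K : ℝ, 0 ≤ K ∧ ∀ B : ℕ, 1 ≤ B → ∀ f : ℤ[X][X], f.Monic → f.natDegree = D →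
      (∀ j, (f.coeff j).natDegree ≤ k) → (∀ g : ℤ[X], f.eval g ≠ 0) → ∀ S : Finset (ℤ × ℤ),
      (∀ z ∈ S, |z.1| ≤ B ∧ |z.2| ≤ ((B + 2) ^ c : ℕ) ∧ evalEval z.1 z.2 f = 0) →
      (∀ z ∈ S, evalEval z.1 z.2 (derivative f) ≠ 0 ∧
        |evalEval z.1 z.2 (derivative f)| ≤ ((B + 2) ^ c : ℕ)) →
      ((S.image Prod.fst).card : ℝ) ≤ K * (√B * Real.log (B + 2)) := by
  refine ⟨2 * c * (2 ^ (2 * c) * 4 * D * (k + (3 * c + 5) * D + (3 * c + 5))), by positivity, ?_⟩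
  rintro B hB f hf rfl hk hroot S hS hS'
  set N := 2 * (Nat.sqrt B + 1) with hN_def
  set A := c * Nat.clog 2 (B + 2) + 5 with hA_def
  have hsqrt : B < (Nat.sqrt B + 1) * (Nat.sqrt B + 1) := Nat.lt_succ_sqrt B
  have hcount := card_image_fst_le_of_sqrt_lt hf hroot hk (N := N) (A := A) (by omega) hB hc
    (by nlinarith) (by nlinarith) (four_mul_sq_mul_pow_le le_rfl) hS hS'
  have hBr : (1 : ℝ) ≤ B := by exact_mod_cast hB
  set L := Real.log ((B : ℝ) + 2)
  have hL : 1 ≤ L := one_le_log_add_two hBr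
  have hN : (N : ℝ) ≤ 4 * √B := by
    have h1 : 1 ≤ √(B : ℝ) := Real.one_le_sqrt.2 hBr
    have h2 : (Nat.sqrt B : ℝ) ≤ √B := Real.nat_sqrt_le_real_sqrt
    push_cast [hN_def]
    linarith
  have hA : (A : ℝ) ≤ (3 * c + 5) * L := by
    have h1 : (c : ℝ) * Nat.clog 2 (B + 2) ≤ c * (3 * L) := by
      gcongr
      exact clog_le_three_mul_log hB
    push_cast [hA_def]
    linarith
  have hkL : (k : ℝ) ≤ k * L := le_mul_of_one_le_right (by positivity) hL
  calc ((S.image Prod.fst).card : ℝ)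
      ≤ 2 * c * (2 ^ (2 * c) * N * f.natDegree * (k + A * f.natDegree + A)) := by
        exact_mod_cast hcount
    _ ≤ 2 * c * (2 ^ (2 * c) * (4 * √B) * f.natDegree *
          (k * L + (3 * c + 5) * L * f.natDegree + (3 * c + 5) * L)) := by gcongr
    _ = _ := by ring

/-! ### Boxes and polynomial growth -/

/-- The integer points of the cube `[-B, B]^m`. -/
def box (m B : ℕ) : Finset (Fin m → ℤ) := Fintype.piFinset fun _ => Finset.Icc (-B : ℤ) B

lemma mem_box {m B : ℕ} {x : Fin m → ℤ} : x ∈ box m B ↔ ∀ i, |x i| ≤ B := by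
  simp [box, abs_le]

lemma card_Icc_neg (B : ℕ) : (Finset.Icc (-B : ℤ) B).card = 2 * B + 1 := by
  rw [Int.card_Icc]; omega

lemma card_box (m B : ℕ) : (box m B).card = (2 * B + 1) ^ m := by
  simp only [box, Fintype.card_piFinset_const, card_Icc_neg]

open Classical in
lemma exists_card_zeros_mul_le {m : ℕ} {P : MvPolynomial (Fin m) ℤ} (hP : P ≠ 0) :
    ∃ K : ℝ, 0 ≤ K ∧ ∀ B : ℕ, 1 ≤ B →
      (((box m B).filter fun x => MvPolynomial.eval x P = 0).card : ℝ) * B ≤ K * B ^ m := by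
  refine ⟨P.totalDegree * 3 ^ m, by positivity, fun B hB => ?_⟩
  have hB' : (1 : ℝ) ≤ B := by exact_mod_cast hB
  have schwartz_zippel :
      (((box m B).filter fun x => MvPolynomial.eval x P = 0).card : ℝ) * (2 * B + 1) ≤
        P.totalDegree * (2 * B + 1) ^ m := by
    have h := MvPolynomial.schwartz_zippel_totalDegree hP (Finset.Icc (-B : ℤ) B)
    rw [card_Icc_neg, div_le_div_iff₀ (by positivity) (by positivity)] at h
    exact_mod_cast h
  calc _ ≤ (((box m B).filter fun x => MvPolynomial.eval x P = 0).card : ℝ) * (2 * B + 1) := by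
        gcongr; linarith
    _ ≤ P.totalDegree * (2 * B + 1) ^ m := schwartz_zippel
    _ ≤ P.totalDegree * (3 * B) ^ m := by gcongr; linarith
    _ = _ := by rw [mul_pow]; ring

/-- The integer functions bounded by a power of `h + 2`; the shift by `2` lets the exponent absorb
constant factors. -/
def polynomialGrowth {α : Type*} (h : α → ℕ) : Subring (α → ℤ) where
  carrier := {a | ∃ c : ℕ, ∀ z, |a z| ≤ ((h z : ℤ) + 2) ^ c}
  zero_mem' := ⟨0, fun z => by simp⟩
  one_mem' := ⟨0, fun z => by simp⟩
  neg_mem' := fun ⟨c, hc⟩ => ⟨c, fun z => by simpa using hc z⟩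
  add_mem' := by
    rintro a b ⟨c, hc⟩ ⟨d, hd⟩
    refine ⟨c + d + 1, fun z => ?_⟩
    have one_le : (1 : ℤ) ≤ h z + 2 := by omega
    calc |a z + b z| ≤ |a z| + |b z| := abs_add_le _ _
      _ ≤ ((h z : ℤ) + 2) ^ (c + d) + ((h z : ℤ) + 2) ^ (c + d) :=
          add_le_add ((hc z).trans (pow_le_pow_right₀ one_le (by omega)))
            ((hd z).trans (pow_le_pow_right₀ one_le (by omega)))
      _ = ((h z : ℤ) + 2) ^ (c + d) * 2 := by ring
      _ ≤ ((h z : ℤ) + 2) ^ (c + d) * (h z + 2) := by gcongr; omega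
      _ = _ := (pow_succ _ _).symm
  mul_mem' := by
    rintro a b ⟨c, hc⟩ ⟨d, hd⟩
    refine ⟨c + d, fun z => ?_⟩
    rw [Pi.mul_apply, abs_mul, pow_add]
    exact mul_le_mul (hc z) (hd z) (abs_nonneg _) (by positivity)

lemma mem_polynomialGrowth {α : Type*} {h : α → ℕ} {a : α → ℤ} :
    a ∈ polynomialGrowth h ↔ ∃ c : ℕ, ∀ z, |a z| ≤ ((h z : ℤ) + 2) ^ c := Iff.rfl

lemma abs_le_of_isRoot_of_monic {f : ℤ[X]} (hf : f.Monic) {y : ℤ} (hy : f.IsRoot y) {C : ℕ}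
    (hC : ∀ j < f.natDegree, |f.coeff j| ≤ C) : |y| ≤ C := by
  have hf' : (f.map (Int.castRingHom ℝ)).Monic := hf.map _
  have hlt := (hy.map (f := Int.castRingHom ℝ)).norm_lt_cauchyBound hf'.ne_zero
  have hle : cauchyBound (f.map (Int.castRingHom ℝ)) ≤ C + 1 := by
    rw [cauchyBound, hf'.leadingCoeff, nnnorm_one, div_one]
    gcongr
    refine Finset.sup_le fun j hj => ?_
    rw [hf.natDegree_map, Finset.mem_range] at hj
    rw [← NNReal.coe_le_coe, coe_nnnorm, coeff_map, eq_intCast, Real.norm_eq_abs, ← Int.cast_abs]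
    rw [NNReal.coe_natCast]
    exact_mod_cast hC j hj
  have h : |(y : ℝ)| < C + 1 := by
    simpa using NNReal.coe_lt_coe.2 (hlt.trans_le hle)
  exact Int.lt_add_one_iff.1 (by exact_mod_cast h)

lemma mem_polynomialGrowth_of_isIntegral {α : Type*} {h : α → ℕ} {y : α → ℤ}
    (hy : IsIntegral (polynomialGrowth h) y) : y ∈ polynomialGrowth h := by
  obtain ⟨p, hp, hpy⟩ := hy
  choose c hc using fun j => mem_polynomialGrowth.1 (p.coeff j).2
  refine ⟨(Finset.range p.natDegree).sup c, fun z => ?_⟩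
  let φ : polynomialGrowth h →+* ℤ := (Pi.evalRingHom _ z).comp (polynomialGrowth h).subtype
  have root : (p.map φ).IsRoot (y z) := by
    rw [IsRoot, eval_map]
    exact (hom_eval₂ p _ (Pi.evalRingHom _ z) y).symm.trans (congrFun hpy z)
  have := abs_le_of_isRoot_of_monic (hp.map φ) root
    (C := (h z + 2) ^ (Finset.range p.natDegree).sup c) fun j hj => by
      rw [hp.natDegree_map] at hj
      rw [coeff_map, Nat.cast_pow, Nat.cast_add, Nat.cast_ofNat]
      exact (hc j z).trans (pow_le_pow_right₀ (by omega) (Finset.le_sup (Finset.mem_range.2 hj)))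
  exact_mod_cast this

/-- Evaluation `ℤ[x₁, …, xₘ][T] → ℤ` at the point `(x, t)`. -/
def evalAt {m : ℕ} (x : Fin m → ℤ) (t : ℤ) : (MvPolynomial (Fin m) ℤ)[X] →+* ℤ :=
  (evalRingHom t).comp (mapRingHom (MvPolynomial.eval x))

@[simp]
lemma evalAt_C {m : ℕ} (x : Fin m → ℤ) (t : ℤ) (a : MvPolynomial (Fin m) ℤ) :
    evalAt x t (C a) = MvPolynomial.eval x a := by
  simp [evalAt]

@[simp]
lemma evalAt_X {m : ℕ} (x : Fin m → ℤ) (t : ℤ) : evalAt x t X = t := by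
  simp [evalAt]

lemma evalEval_map_eval {m : ℕ} (F : (MvPolynomial (Fin m) ℤ)[X][X]) (x : Fin m → ℤ) (t y : ℤ) :
    evalEval t y (F.map (mapRingHom (MvPolynomial.eval x))) = F.eval₂ (evalAt x t) y := by
  rw [evalAt, ← eval₂_map, eval₂_evalRingHom]

lemma evalAt_mem_polynomialGrowth {α : Type*} {h : α → ℕ} {m : ℕ} {x : α → Fin m → ℤ} {t : α → ℤ}
    (hx : ∀ z i, |x z i| ≤ h z) (ht : ∀ z, |t z| ≤ h z) (a : (MvPolynomial (Fin m) ℤ)[X]) :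
    RingHom.pi (fun z => evalAt (x z) (t z)) a ∈ polynomialGrowth h := by
  have le_height {u : α → ℤ} (hu : ∀ z, |u z| ≤ h z) : u ∈ polynomialGrowth h :=
    ⟨1, fun z => by rw [pow_one]; exact (hu z).trans (by omega)⟩
  have mem_C (r : MvPolynomial (Fin m) ℤ) :
      RingHom.pi (fun z => evalAt (x z) (t z)) (C r) ∈ polynomialGrowth h := by
    induction r using MvPolynomial.induction_on with
    | C k =>
      rw [eq_intCast MvPolynomial.C, map_intCast, map_intCast]
      exact intCast_mem _ k
    | add p q hp hq => rw [map_add, map_add]; exact add_mem hp hq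
    | mul_X p i hp =>
      rw [map_mul, map_mul]
      exact mul_mem hp (le_height fun z => by simpa using hx z i)
  induction a using Polynomial.induction_on with
  | C r => exact mem_C r
  | add p q hp hq => rw [map_add]; exact add_mem hp hq
  | monomial k r ih =>
    rw [pow_succ, ← mul_assoc, map_mul]
    exact mul_mem ih (le_height fun z => by simpa using ht z)

lemma exists_abs_le_pow_of_eval₂_evalAt_eq_zero {m : ℕ} {F : (MvPolynomial (Fin m) ℤ)[X][X]}
    (hF : F.Monic) : ∃ c : ℕ, 1 ≤ c ∧ ∀ B : ℕ, ∀ x ∈ box m B, ∀ t : ℤ, |t| ≤ B → ∀ y : ℤ,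
      F.eval₂ (evalAt x t) y = 0 → |y| ≤ ((B + 2) ^ c : ℕ) ∧
        |(derivative F).eval₂ (evalAt x t) y| ≤ ((B + 2) ^ c : ℕ) := by
  let α := {z : ℕ × (Fin m → ℤ) × ℤ × ℤ //
    z.2.1 ∈ box m z.1 ∧ |z.2.2.1| ≤ z.1 ∧ F.eval₂ (evalAt z.2.1 z.2.2.1) z.2.2.2 = 0}
  let h : α → ℕ := fun z => z.1.1
  let y : α → ℤ := fun z => z.1.2.2.2
  let φ : (MvPolynomial (Fin m) ℤ)[X] →+* α → ℤ :=
    RingHom.pi fun z => evalAt z.1.2.1 z.1.2.2.1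
  have eval₂_apply (G : (MvPolynomial (Fin m) ℤ)[X][X]) (z : α) :
      G.eval₂ φ y z = G.eval₂ (evalAt z.1.2.1 z.1.2.2.1) (y z) :=
    hom_eval₂ G φ (Pi.evalRingHom _ z) y
  have φ_mem (a) : φ a ∈ polynomialGrowth h :=
    evalAt_mem_polynomialGrowth (fun z => mem_box.1 z.2.1) (fun z => z.2.2.1) a
  have y_mem : y ∈ polynomialGrowth h := mem_polynomialGrowth_of_isIntegral
    ⟨F.map (φ.codRestrict _ φ_mem), hF.map _, by
      rw [eval₂_map]; exact funext fun z => (eval₂_apply F z).trans z.2.2.2⟩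
  have derivative_mem : (derivative F).eval₂ φ y ∈ polynomialGrowth h := by
    rw [eval₂_eq_sum]
    exact sum_mem fun j _ => mul_mem (φ_mem _) (pow_mem y_mem j)
  obtain ⟨c, hc⟩ := y_mem
  obtain ⟨d, hd⟩ := derivative_mem
  refine ⟨c + d + 1, by omega, fun B x hx t ht w hw => ?_⟩
  have weaken {e : ℕ} (he : e ≤ c + d + 1) : ((B : ℤ) + 2) ^ e ≤ ((B + 2) ^ (c + d + 1) : ℕ) := by
    push_cast; exact pow_le_pow_right₀ (by omega) he
  let z : α := ⟨(B, x, t, w), hx, ht, hw⟩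
  refine ⟨(hc z).trans (weaken (by omega)), ?_⟩
  rw [← eval₂_apply _ z]
  exact (hd z).trans (weaken (by omega))

/-! ### Polynomial roots at a generic point -/

/-- `F`, specialised along `φ`, has a root in the target ring. -/
def SolvableAt {A R : Type*} [CommRing A] [CommRing R] (φ : A →+* R) (F : A[X]) : Prop :=
  ∃ z : R, F.eval₂ φ z = 0

lemma solvableAt_map {A B R : Type*} [CommRing A] [CommRing B] [CommRing R] (φ : B →+* R)
    (ψ : A →+* B) (F : A[X]) : SolvableAt φ (F.map ψ) ↔ SolvableAt (φ.comp ψ) F := by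
  simp only [SolvableAt, eval₂_map]

lemma exists_forall_natDegree_coeff_le {R : Type*} [CommRing R] (F : R[X][X]) :
    ∃ k, ∀ j, (F.coeff j).natDegree ≤ k := by
  refine ⟨F.support.sup fun j => (F.coeff j).natDegree, fun j => ?_⟩
  by_cases hj : j ∈ F.support
  · exact Finset.le_sup (f := fun j => (F.coeff j).natDegree) hj
  · simp [notMem_support_iff.1 hj]

lemma natDegree_le_of_eval_eq_zero {R : Type*} [CommRing R] [IsDomain R] {F : R[X][X]}
    (hF : F.Monic) {k : ℕ} (hk : ∀ j, (F.coeff j).natDegree ≤ k) {q : R[X]} (hq : F.eval q = 0) :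
    q.natDegree ≤ k := by
  by_contra! hlt
  obtain ⟨d, hd⟩ := Nat.exists_eq_succ_of_ne_zero fun h0 : F.natDegree = 0 => by
    simp [hF.natDegree_eq_zero.1 h0] at hq
  have leading_coeff : F.coeff (d + 1) = 1 := by rw [← Nat.succ_eq_add_one, ← hd]; exact hF
  rw [eval_eq_sum_range, hd, Finset.sum_range_succ, leading_coeff, one_mul, add_comm] at hq
  have lower_terms : (∑ j ∈ Finset.range (d + 1), F.coeff j * q ^ j).natDegree ≤
      k + d * q.natDegree := natDegree_sum_le_of_forall_le _ _ fun j hj =>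
    natDegree_mul_le_of_le (hk j) (natDegree_pow_le.trans
      (Nat.mul_le_mul_right _ (Nat.lt_succ_iff.1 (Finset.mem_range.1 hj))))
  have := congrArg natDegree (eq_neg_of_add_eq_zero_left hq)
  rw [natDegree_neg, natDegree_pow] at this
  rw [← this, Nat.succ_mul] at lower_terms
  omega

/-- The polynomial `∑_{j < k} a_j T^j` with indeterminate coefficients `a_j`. -/
def genericPolynomial (R : Type*) [CommRing R] (k : ℕ) : (MvPolynomial (Fin k) R)[X] :=
  ∑ j : Fin k, monomial (j : ℕ) (MvPolynomial.X j)

/-- The ideal of conditions on `a₀, …, a_{k-1}` expressing that `∑_{j < k} a_j T^j` is a root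
of `F`. -/
def rootIdeal {R : Type*} [CommRing R] (F : R[X][X]) (k : ℕ) : Ideal (MvPolynomial (Fin k) R) :=
  Ideal.span (Set.range (F.eval₂ (mapRingHom MvPolynomial.C) (genericPolynomial R k)).coeff)

lemma rootIdeal_le_ker_iff {R S : Type*} [CommRing R] [CommRing S] (F : R[X][X]) {k : ℕ}
    (φ : R →+* S) (a : Fin k → S) :
    rootIdeal F k ≤ RingHom.ker (MvPolynomial.eval₂Hom φ a) ↔
      F.eval₂ (mapRingHom φ) (∑ j : Fin k, monomial (j : ℕ) (a j)) = 0 := by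
  have specialise :
      (F.eval₂ (mapRingHom MvPolynomial.C) (genericPolynomial R k)).map
          (MvPolynomial.eval₂Hom φ a) =
        F.eval₂ (mapRingHom φ) (∑ j : Fin k, monomial (j : ℕ) (a j)) := by
    rw [← coe_mapRingHom, hom_eval₂, mapRingHom_comp, genericPolynomial, map_sum]
    congr 2
    · ext; simp
    · simp
  rw [rootIdeal, Ideal.span_le, Set.range_subset_iff, ← specialise, Polynomial.ext_iff]
  simp [RingHom.mem_ker]

attribute [local instance] MvPolynomial.algebraMvPolynomial in
/-- The Nullstellensatz over the fraction field of `R`, with denominators cleared. -/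
lemma exists_C_mem_or_exists_le_ker {R σ : Type*} [CommRing R] [IsDomain R] [Finite σ]
    (I : Ideal (MvPolynomial σ R)) :
    (∃ Δ : R, Δ ≠ 0 ∧ MvPolynomial.C Δ ∈ I) ∨
      ∃ a : σ → AlgebraicClosure (FractionRing R),
        I ≤ RingHom.ker (MvPolynomial.eval₂Hom (algebraMap R _) a) := by
  let K := FractionRing R
  refine or_iff_not_imp_left.2 fun no_const => ?_
  push Not at no_const
  let M := (nonZeroDivisors R).map (MvPolynomial.C (σ := σ))
  have hdisjoint : Disjoint (M : Set (MvPolynomial σ R)) (I : Set (MvPolynomial σ R)) := by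
    rw [Set.disjoint_left]
    rintro _ ⟨r, hr, rfl⟩
    exact no_const r (nonZeroDivisors.ne_zero hr)
  have : IsLocalization M (MvPolynomial σ K) := MvPolynomial.isLocalization (nonZeroDivisors R) K
  have hproper :=
    (IsLocalization.map_algebraMap_ne_top_iff_disjoint M (MvPolynomial σ K) I).2 hdisjoint
  obtain ⟨J, hJ, hIJ⟩ := Ideal.exists_le_maximal _ hproper
  obtain ⟨a, ha⟩ :=
    MvPolynomial.eq_vanishingIdeal_singleton_of_isMaximal (AlgebraicClosure K) hJ
  refine ⟨a, fun p hp => ?_⟩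
  have hmem : MvPolynomial.map (algebraMap R K) p ∈ J := hIJ (Ideal.mem_map_of_mem _ hp)
  rw [ha, MvPolynomial.mem_vanishingIdeal_singleton_iff, MvPolynomial.aeval_def,
    MvPolynomial.eval₂_map, ← IsScalarTower.algebraMap_eq] at hmem
  exact hmem

lemma exists_forall_not_solvableAt_or_solvableAt {R : Type*} [CommRing R] [IsDomain R]
    {F : R[X][X]} (hF : F.Monic) (S : Type*) [CommRing S] [IsDomain S] :
    (∃ Δ : R, Δ ≠ 0 ∧ ∀ φ : R →+* S, φ Δ ≠ 0 → ¬SolvableAt (mapRingHom φ) F) ∨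
      SolvableAt (mapRingHom (algebraMap R (AlgebraicClosure (FractionRing R)))) F := by
  obtain ⟨k, hk⟩ := exists_forall_natDegree_coeff_le F
  refine (exists_C_mem_or_exists_le_ker (rootIdeal F (k + 1))).imp ?_ ?_
  · rintro ⟨Δ, hΔ, hmem⟩
    refine ⟨Δ, hΔ, fun φ hφ ⟨q, hq⟩ => hφ ?_⟩
    have hdeg : q.natDegree < k + 1 := by
      rw [← eval_map] at hq
      refine Nat.lt_succ_iff.2 (natDegree_le_of_eval_eq_zero (hF.map _) (fun j => ?_) hq)
      rw [coeff_map]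
      exact natDegree_map_le.trans (hk j)
    have q_eq : ∑ j : Fin (k + 1), monomial (j : ℕ) (q.coeff j) = q :=
      (Fin.sum_univ_eq_sum_range (fun j => monomial j (q.coeff j)) _).trans
        (as_sum_range' q _ hdeg).symm
    have := (rootIdeal_le_ker_iff F φ fun j : Fin (k + 1) => q.coeff j).2 (by rwa [q_eq]) hmem
    simpa [RingHom.mem_ker] using this
  · rintro ⟨a, ha⟩
    exact ⟨_, (rootIdeal_le_ker_iff F _ a).1 ha⟩

open scoped IntermediateField

/-! ### Extensions generated by a root of a polynomial with constant coefficients -/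

/-- `M = E(y)`, and the minimal polynomial of `y` is (the image of) the monic polynomial `F` over
the subring `A` of `E`. -/
structure IsMonicGenerator (E : Type*) {A M : Type*} [CommRing A] [Field E] [Algebra A E] [Field M]
    [Algebra E M] (F : A[X]) (y : M) : Prop where
  monic : F.Monic
  minpoly_eq : minpoly E y = F.map (algebraMap A E)
  adjoin_eq_top : E⟮y⟯ = ⊤

namespace IsMonicGenerator

variable {A E M : Type*} [CommRing A] [Field E] [Algebra A E] [Field M] [Algebra E M] {F : A[X]}
  {y : M}

lemma isIntegral (h : IsMonicGenerator E F y) : IsIntegral E y :=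
  minpoly.ne_zero_iff.1 (h.minpoly_eq ▸ (h.monic.map _).ne_zero)

lemma finrank_eq (h : IsMonicGenerator E F y) : Module.finrank E M = F.natDegree := by
  rw [← IntermediateField.finrank_top', ← h.adjoin_eq_top,
    IntermediateField.adjoin.finrank h.isIntegral, h.minpoly_eq, h.monic.natDegree_map]

lemma finiteDimensional (h : IsMonicGenerator E F y) : FiniteDimensional E M := by
  have := IntermediateField.adjoin.finiteDimensional h.isIntegral
  rw [h.adjoin_eq_top] at this
  exact (IntermediateField.topEquiv (F := E) (E := M)).toLinearEquiv.finiteDimensional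

lemma eval₂_eq_zero (h : IsMonicGenerator E F y) :
    F.eval₂ ((algebraMap E M).comp (algebraMap A E)) y = 0 := by
  rw [← eval₂_map, ← h.minpoly_eq]
  exact minpoly.aeval E y

lemma exists_algHom_eq (h : IsMonicGenerator E F y) {Ω : Type*} [Field Ω] [Algebra E Ω] {y' : Ω}
    (hy' : aeval y' (F.map (algebraMap A E)) = 0) : ∃ ψ : M →ₐ[E] Ω, ψ y = y' := by
  let ψ : E⟮y⟯ →ₐ[E] Ω := (IntermediateField.algHomAdjoinIntegralEquiv E h.isIntegral).symm
    ⟨y', mem_aroots.2 ⟨minpoly.ne_zero h.isIntegral, h.minpoly_eq ▸ hy'⟩⟩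
  let e : M ≃ₐ[E] E⟮y⟯ :=
    IntermediateField.topEquiv.symm.trans (IntermediateField.equivOfEq h.adjoin_eq_top.symm)
  exact ⟨ψ.comp e, IntermediateField.algHomAdjoinIntegralEquiv_symm_apply_gen E h.isIntegral _⟩

lemma exists_isMonicGenerator_of_mem_adjoin (h : IsMonicGenerator E F y) {Ω : Type*} [Field Ω]
    [Algebra E Ω] {y' θ : Ω} (hy' : aeval y' (F.map (algebraMap A E)) = 0) {g : A[X]} (hg : g.Monic)
    (hθ : aeval θ (g.map (algebraMap A E)) = 0) (hdeg : g.natDegree ≤ F.natDegree)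
    (hmem : y' ∈ E⟮θ⟯) : ∃ θ' : M, IsMonicGenerator E g θ' := by
  obtain ⟨ψ, rfl⟩ := h.exists_algHom_eq hy'
  have θ_integral : IsIntegral E θ := ⟨_, hg.map _, hθ⟩
  have := IntermediateField.adjoin.finiteDimensional θ_integral
  have := h.finiteDimensional
  have minpoly_θ_dvd := minpoly.dvd E θ hθ
  have natDegree_minpoly_le : (minpoly E θ).natDegree ≤ g.natDegree :=
    (natDegree_le_of_dvd minpoly_θ_dvd (hg.map _).ne_zero).trans (hg.natDegree_map _).le
  have finrank_θ := IntermediateField.adjoin.finrank θ_integral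
  have finrank_range : Module.finrank E ψ.fieldRange = F.natDegree :=
    h.finrank_eq ▸ (AlgEquiv.ofInjectiveField ψ).toLinearEquiv.finrank_eq.symm
  have range_le : ψ.fieldRange ≤ E⟮θ⟯ := by
    rw [AlgHom.fieldRange_eq_map, ← h.adjoin_eq_top, IntermediateField.adjoin_map,
      Set.image_singleton]
    exact IntermediateField.adjoin_simple_le_iff.2 hmem
  have range_eq : ψ.fieldRange = E⟮θ⟯ :=
    IntermediateField.eq_of_le_of_finrank_le range_le (by omega)
  have natDegree_minpoly : (minpoly E θ).natDegree = F.natDegree := by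
    rw [← finrank_θ, ← range_eq, finrank_range]
  obtain ⟨θ', rfl⟩ : θ ∈ ψ.fieldRange := range_eq ▸ IntermediateField.mem_adjoin_simple_self E θ
  have minpoly_θ' := minpoly.algHom_eq ψ ψ.injective θ'
  refine ⟨θ', hg, ?_, ?_⟩
  · rw [← minpoly_θ']
    refine (eq_of_monic_of_dvd_of_natDegree_le (minpoly.monic θ_integral) (hg.map _)
      minpoly_θ_dvd ?_).symm
    rw [hg.natDegree_map]
    omega
  · rw [Field.primitive_element_iff_minpoly_natDegree_eq, ← minpoly_θ', h.finrank_eq]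
    exact natDegree_minpoly

end IsMonicGenerator

/-- `M` is generated over `E ⊇ R[T]` by a root of a monic polynomial not involving `T`. -/
def IsConstantlyGenerated (R : Type*) [CommRing R] (E M : Type*) [Field E] [Algebra R[X] E]
    [Field M] [Algebra E M] : Prop :=
  ∃ (g : R[X]) (θ : M), IsMonicGenerator E (g.map (C : R →+* R[X])) θ

lemma finiteDimensional_adjoin_coeffs (K : Type*) {L : Type*} [Field K] [Field L] [Algebra K L]
    [Algebra.IsAlgebraic K L] (q : L[X]) :
    FiniteDimensional K (IntermediateField.adjoin K (q.coeffs : Set L)) :=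
  IntermediateField.finiteDimensional_adjoin fun x _ => Algebra.IsIntegral.isIntegral x

lemma coeff_mem_adjoin_coeffs (K : Type*) {L : Type*} [Field K] [Field L] [Algebra K L] (q : L[X])
    (j : ℕ) : q.coeff j ∈ IntermediateField.adjoin K (q.coeffs : Set L) := by
  by_cases h : q.coeff j = 0
  · exact h ▸ zero_mem _
  · exact IntermediateField.subset_adjoin K _ (coeff_mem_coeffs h)

/-- The conjugates of `q` over `K` are roots of `F` as well. -/
lemma finrank_adjoin_coeffs_le {K L : Type*} [Field K] [PerfectField K] [Field L] [Algebra K L]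
    [IsAlgClosed L] [Algebra.IsAlgebraic K L] {F : K[X][X]} (hF : F ≠ 0) {q : L[X]}
    (hq : F.eval₂ (mapRingHom (algebraMap K L)) q = 0) :
    Module.finrank K (IntermediateField.adjoin K (q.coeffs : Set L)) ≤ F.natDegree := by
  classical
  let K' := IntermediateField.adjoin K (q.coeffs : Set L)
  have : FiniteDimensional K K' := finiteDimensional_adjoin_coeffs K q
  obtain ⟨Q, hQ⟩ : ∃ Q : K'[X], Q.map (algebraMap K' L) = q :=
    (mem_lifts q).1 ((lifts_iff_coeff_lifts q).2 fun j => ⟨⟨_, coeff_mem_adjoin_coeffs K q j⟩, rfl⟩)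
  have map_inj {S : Type _} [Field S] [Algebra K S] :
      Function.Injective (mapRingHom (algebraMap K S)) := map_injective _ (algebraMap K S).injective
  have root_Q : F.eval₂ (mapRingHom (algebraMap K K')) Q = 0 := by
    apply map_injective _ (algebraMap K' L).injective
    rw [← coe_mapRingHom, hom_eval₂, mapRingHom_comp, ← IsScalarTower.algebraMap_eq,
      coe_mapRingHom, hQ, hq, Polynomial.map_zero]
  have root_conjugate (τ : K' →ₐ[K] L) :
      Q.map (τ : K' →+* L) ∈ (F.map (mapRingHom (algebraMap K L))).roots.toFinset := by
    rw [Multiset.mem_toFinset, mem_roots ((Polynomial.map_ne_zero_iff map_inj).2 hF), IsRoot,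
      eval_map, ← τ.comp_algebraMap, ← mapRingHom_comp, ← coe_mapRingHom, ← hom_eval₂, root_Q,
      map_zero]
  have conjugate_injective : Function.Injective fun τ : K' →ₐ[K] L => Q.map (τ : K' →+* L) := by
    intro τ τ' h
    refine IntermediateField.algHom_ext_of_eq_adjoin (F := K) (E := L) (S := K')
      (s := (q.coeffs : Set L)) (hS := rfl) fun x hx => ?_
    obtain ⟨j, -, rfl⟩ := mem_coeffs_iff.1 hx
    have coeff_Q : Q.coeff j = ⟨q.coeff j, IntermediateField.subset_adjoin K _ hx⟩ :=
      Subtype.ext ((coeff_map _ j).symm.trans (congrArg (coeff · j) hQ))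
    have coeff_eq : τ (Q.coeff j) = τ' (Q.coeff j) := by
      simpa only [coeff_map, RingHom.coe_coe] using congrArg (coeff · j) h
    rwa [coeff_Q] at coeff_eq
  calc Module.finrank K K' = Fintype.card (K' →ₐ[K] L) := (AlgHom.card K K' L).symm
    _ ≤ (F.map (mapRingHom (algebraMap K L))).roots.toFinset.card :=
        Finset.card_le_card_of_injOn _ (fun τ _ => root_conjugate τ) conjugate_injective.injOn
    _ ≤ (F.map (mapRingHom (algebraMap K L))).natDegree :=
        (Multiset.toFinset_card_le _).trans (card_roots' _)
    _ ≤ F.natDegree := natDegree_map_le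

lemma exists_isIntegral_adjoin_simple_eq (R : Type*) {K L : Type*} [CommRing R] [IsDomain R]
    [Field K] [PerfectField K] [Algebra R K] [IsFractionRing R K] [Field L] [Algebra K L]
    [Algebra R L] [IsScalarTower R K L] (K' : IntermediateField K L) [FiniteDimensional K K'] :
    ∃ θ : L, IsIntegral R θ ∧ K⟮θ⟯ = K' := by
  obtain ⟨α, hα⟩ := Field.exists_primitive_element K K'
  have adjoin_α : K⟮(α : L)⟯ = K' := by
    rw [← IntermediateField.lift_adjoin_simple, hα, IntermediateField.lift_top]
  have α_algebraic : IsAlgebraic R (α : L) := by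
    rw [IsFractionRing.isAlgebraic_iff R K]
    exact (Algebra.IsAlgebraic.isAlgebraic (R := K) α).algebraMap
  obtain ⟨r, hr, hint⟩ := α_algebraic.exists_integral_multiple
  have hr' : algebraMap R K r ≠ 0 := IsFractionRing.to_map_ne_zero_of_mem_nonZeroDivisors
    (mem_nonZeroDivisors_of_ne_zero hr)
  have adjoin_smul : K⟮algebraMap R K r • (α : L)⟯ = K⟮(α : L)⟯ := by
    apply le_antisymm <;> rw [IntermediateField.adjoin_simple_le_iff]
    · exact IntermediateField.smul_mem _ (IntermediateField.mem_adjoin_simple_self K _)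
    · have := IntermediateField.smul_mem _ (x := (algebraMap R K r)⁻¹)
        (IntermediateField.mem_adjoin_simple_self K (algebraMap R K r • (α : L)))
      rwa [inv_smul_smul₀ hr'] at this
  refine ⟨r • (α : L), hint, ?_⟩
  rw [← algebraMap_smul K r (α : L), adjoin_smul, adjoin_α]

lemma map_mem_adjoin_simple {K L E Ω : Type*} [Field K] [Field L] [Algebra K L] [Field E] [Field Ω]
    [Algebra E Ω] (j : K →+* E) (ι : L →+* Ω)
    (comm : ι.comp (algebraMap K L) = (algebraMap E Ω).comp j) {x z : L} (hz : z ∈ K⟮x⟯) :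
    ι z ∈ E⟮ι x⟯ := by
  induction hz using IntermediateField.adjoin_induction with
  | mem w hw =>
    obtain rfl : w = x := hw
    exact IntermediateField.mem_adjoin_simple_self E _
  | algebraMap w =>
    exact (RingHom.congr_fun comm w : ι (algebraMap K L w) = _) ▸
      IntermediateField.algebraMap_mem _ _
  | add w w' _ _ hw hw' => exact map_add ι w w' ▸ add_mem hw hw'
  | inv w _ hw => exact map_inv₀ ι w ▸ inv_mem hw
  | mul w w' _ _ hw hw' => exact map_mul ι w w' ▸ mul_mem hw hw'

lemma exists_monic_coeff_mem_adjoin {R : Type*} (K : Type*) {L : Type*} [CommRing R] [IsDomain R]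
    [IsIntegrallyClosed R] [Field K] [PerfectField K] [Algebra R K] [IsFractionRing R K] [Field L]
    [Algebra K L] [IsAlgClosed L] [Algebra.IsAlgebraic K L] [Algebra R L] [IsScalarTower R K L]
    {F : R[X][X]} (hF : F.Monic) {q : L[X]} (hq : F.eval₂ (mapRingHom (algebraMap R L)) q = 0) :
    ∃ (g : R[X]) (θ : L), g.Monic ∧ g.eval₂ (algebraMap R L) θ = 0 ∧
      g.natDegree ≤ F.natDegree ∧ ∀ j, q.coeff j ∈ K⟮θ⟯ := by
  have := finiteDimensional_adjoin_coeffs K q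
  obtain ⟨θ, θ_integral, adjoin_θ⟩ := exists_isIntegral_adjoin_simple_eq R
    (IntermediateField.adjoin K (q.coeffs : Set L))
  have monic := minpoly.monic θ_integral
  refine ⟨minpoly R θ, θ, monic, minpoly.aeval R θ, ?_,
    fun j => adjoin_θ ▸ coeff_mem_adjoin_coeffs K q j⟩
  rw [← monic.natDegree_map (algebraMap R K),
    ← minpoly.isIntegrallyClosed_eq_field_fractions' K θ_integral,
    ← IntermediateField.adjoin.finrank (Algebra.IsIntegral.isIntegral θ), adjoin_θ,
    ← hF.natDegree_map (mapRingHom (algebraMap R K))]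
  refine finrank_adjoin_coeffs_le (hF.map _).ne_zero ?_
  rwa [eval₂_map, mapRingHom_comp, ← IsScalarTower.algebraMap_eq]

lemma map_mem_adjoin_map_C {R K L E Ω : Type*} [CommRing R] [Field K] [Algebra R K]
    [IsFractionRing R K] [Field L] [Algebra K L] [Algebra R L] [IsScalarTower R K L] [Field E]
    [Algebra R[X] E] [FaithfulSMul R[X] E] [Field Ω] [Algebra E Ω] {κ : L[X] →+* Ω}
    (comm : κ.comp (mapRingHom (algebraMap R L)) = (algebraMap E Ω).comp (algebraMap R[X] E))
    {q : L[X]} {θ : L} (hq : ∀ j, q.coeff j ∈ K⟮θ⟯) : κ q ∈ E⟮κ (C θ)⟯ := by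
  have injective : Function.Injective ((algebraMap R[X] E).comp C) :=
    (FaithfulSMul.algebraMap_injective R[X] E).comp C_injective
  have comm_K : (κ.comp C).comp (algebraMap K L) =
      (algebraMap E Ω).comp (IsFractionRing.lift (K := K) injective) := by
    refine IsFractionRing.ringHom_ext (A := R) fun a => ?_
    simpa [← IsScalarTower.algebraMap_apply] using RingHom.congr_fun comm (C a)
  have κ_X : κ X = algebraMap E Ω (algebraMap R[X] E X) := by
    simpa using RingHom.congr_fun comm X
  rw [as_sum_range_C_mul_X_pow q, map_sum]
  refine sum_mem fun j _ => ?_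
  rw [map_mul, map_pow, κ_X]
  exact mul_mem (map_mem_adjoin_simple _ (κ.comp C) comm_K (hq j))
    (pow_mem (IntermediateField.algebraMap_mem _ _) _)

/-- The coefficients of a root `q` of `F` generate a field `K(θ)` of degree at most `deg F`, so the
minimal polynomial of `θ` presents `M`. -/
lemma IsMonicGenerator.isConstantlyGenerated {R : Type*} (K : Type*) {L Ω E M : Type*} [CommRing R]
    [IsDomain R] [IsIntegrallyClosed R] [Field K] [PerfectField K] [Algebra R K]
    [IsFractionRing R K] [Field L] [Algebra K L] [IsAlgClosed L] [Algebra.IsAlgebraic K L]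
    [Algebra R L] [IsScalarTower R K L] [Field E] [Algebra R[X] E] [IsFractionRing R[X] E]
    [Field M] [Algebra E M] [Field Ω] {κ : L[X] →+* Ω} (hκ : Function.Injective κ)
    {F : R[X][X]} {y : M} (h : IsMonicGenerator E F y)
    (hF : SolvableAt (mapRingHom (algebraMap R L)) F) : IsConstantlyGenerated R E M := by
  obtain ⟨q, hq⟩ := hF
  obtain ⟨g, θ, hg, hθ, hdeg, hmem⟩ := exists_monic_coeff_mem_adjoin K h.monic hq
  have injective : Function.Injective (κ.comp (mapRingHom (algebraMap R L))) := by
    refine hκ.comp (map_injective (algebraMap R L) ?_)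
    rw [IsScalarTower.algebraMap_eq R K L]
    exact (algebraMap K L).injective.comp (IsFractionRing.injective R K)
  let : Algebra E Ω := (IsFractionRing.lift injective).toAlgebra
  have comm : κ.comp (mapRingHom (algebraMap R L)) =
      (algebraMap E Ω).comp (algebraMap R[X] E) :=
    RingHom.ext fun a => (IsFractionRing.lift_algebraMap injective a).symm
  have root_of_eval₂ {f : R[X][X]} {z : L[X]} (hz : f.eval₂ (mapRingHom (algebraMap R L)) z = 0) :
      aeval (κ z) (f.map (algebraMap R[X] E)) = 0 := by
    rw [aeval_def, eval₂_map, ← comm, ← hom_eval₂, hz, map_zero]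
  refine ⟨g, h.exists_isMonicGenerator_of_mem_adjoin (root_of_eval₂ hq) (hg.map C) (θ := κ (C θ))
    (root_of_eval₂ ?_) (natDegree_map_le.trans hdeg) (map_mem_adjoin_map_C comm hmem)⟩
  rw [eval₂_map, mapRingHom_comp_C, ← hom_eval₂, hθ, map_zero]

lemma isConstantlyGenerated_of_solvableAt {R E M : Type*} [CommRing R] [IsDomain R]
    [IsIntegrallyClosed R] [CharZero R] [Field E] [Algebra R[X] E] [IsFractionRing R[X] E]
    [Field M] [Algebra E M] {F : R[X][X]} {y : M} (h : IsMonicGenerator E F y)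
    (hF : SolvableAt (mapRingHom (algebraMap R (AlgebraicClosure (FractionRing R)))) F) :
    IsConstantlyGenerated R E M := by
  have : CharZero (FractionRing R) :=
    charZero_of_injective_algebraMap (IsFractionRing.injective R (FractionRing R))
  exact h.isConstantlyGenerated (FractionRing R)
    (IsFractionRing.injective _ (FractionRing (AlgebraicClosure (FractionRing R))[X])) hF

/-! ### Counting points fibre by fibre -/

lemma exists_map_algebraMap_eq_C_mul (A : Type*) {E : Type*} [CommRing A] [IsDomain A] [Field E]
    [Algebra A E] [IsFractionRing A E] (a : E[X]) :
    ∃ d : A, d ≠ 0 ∧ ∃ a' : A[X], a'.map (algebraMap A E) = C (algebraMap A E d) * a := by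
  obtain ⟨d, hd, h⟩ := IsLocalization.integerNormalization_spec (nonZeroDivisors A) a
  refine ⟨d, nonZeroDivisors.ne_zero hd, _, h.trans ?_⟩
  rw [← algebraMap_smul E d a, smul_eq_C_mul]

lemma exists_mul_add_mul_eq_C {A E : Type*} [CommRing A] [IsDomain A] [Field E] [Algebra A E]
    [IsFractionRing A E] {p q : A[X]}
    (h : IsCoprime (p.map (algebraMap A E)) (q.map (algebraMap A E))) :
    ∃ d : A, d ≠ 0 ∧ ∃ u v : A[X], u * p + v * q = C d := by
  obtain ⟨a, b, hab⟩ := h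
  obtain ⟨d, hd, a', ha⟩ := exists_map_algebraMap_eq_C_mul A a
  obtain ⟨e, he, b', hb⟩ := exists_map_algebraMap_eq_C_mul A b
  refine ⟨d * e, mul_ne_zero hd he, C e * a', C d * b',
    map_injective _ (IsFractionRing.injective A E) ?_⟩
  simp only [Polynomial.map_add, Polynomial.map_mul, ha, hb, map_C, map_mul]
  linear_combination (C (algebraMap A E d) * C (algebraMap A E e)) * hab

lemma map_scaleRoots_of_monic {A B : Type*} [CommRing A] [CommRing B] [Nontrivial B] {g : A[X]}
    (hg : g.Monic) (φ : A →+* B) (a : A) :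
    (g.scaleRoots a).map φ = (g.map φ).scaleRoots (φ a) :=
  map_scaleRoots _ _ _ (by rw [hg.leadingCoeff, map_one]; exact one_ne_zero)

namespace IsMonicGenerator

lemma exists_aeval_eq {A E M : Type*} [CommRing A] [Field E] [Algebra A E] [Field M] [Algebra E M]
    {F : A[X]} {y : M} (h : IsMonicGenerator E F y) (β : M) : ∃ p : E[X], aeval y p = β := by
  have hβ : β ∈ E⟮y⟯.toSubalgebra := by
    rw [IntermediateField.mem_toSubalgebra, h.adjoin_eq_top]
    exact IntermediateField.mem_top
  rwa [IntermediateField.adjoin_simple_toSubalgebra_of_isAlgebraic h.isIntegral.isAlgebraic,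
    Algebra.adjoin_singleton_eq_range_aeval] at hβ

/-- Write `δβ` as a polynomial in `y` over `A`: then `F` divides the polynomial whose vanishing at
`z` says that the specialisation of `δβ` is a root of `g`, rescaled by `δ`. -/
lemma exists_solvableAt_imp {A E M R : Type*} [CommRing A] [IsDomain A] [Field E] [Algebra A E]
    [IsFractionRing A E] [Field M] [Algebra E M] [CommRing R] [IsDomain R] [IsIntegrallyClosed R]
    {F : A[X]} {y : M} (h : IsMonicGenerator E F y) {β : M} {g : A[X]} (hg : g.Monic)
    (hβ : aeval β (g.map (algebraMap A E)) = 0) :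
    ∃ δ : A, δ ≠ 0 ∧ ∀ φ : A →+* R, φ δ ≠ 0 → SolvableAt φ F → SolvableAt φ g := by
  obtain ⟨p, rfl⟩ := h.exists_aeval_eq β
  obtain ⟨δ, hδ, p', hp'⟩ := exists_map_algebraMap_eq_C_mul A p
  obtain ⟨q, hq⟩ : F ∣ (g.scaleRoots δ).comp p' := by
    rw [← map_dvd_map _ (IsFractionRing.injective A E) h.monic, ← h.minpoly_eq]
    refine minpoly.dvd E y ?_
    rw [map_comp, aeval_comp, hp', map_mul, aeval_C, map_scaleRoots_of_monic hg]
    exact scaleRoots_aeval_eq_zero hβ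
  refine ⟨δ, hδ, fun φ hφ ⟨z, hz⟩ => ?_⟩
  rw [← eval_map] at hz
  obtain ⟨w, hw⟩ := exists_eval_eq_zero_of_eval_scaleRoots_eq_zero (hg.map φ) hφ
    (a := (p'.map φ).eval z) (by
      rw [← map_scaleRoots_of_monic hg, ← eval_comp, ← map_comp, hq, Polynomial.map_mul, eval_mul,
        hz, zero_mul])
  exact ⟨w, eval_map φ w ▸ hw⟩

end IsMonicGenerator

lemma IsMonicGenerator.exists_derivative_eval₂_ne_zero {A E M R : Type*} [CommRing A] [IsDomain A]
    [Field E] [CharZero E] [Algebra A E] [IsFractionRing A E] [Field M] [Algebra E M] [CommRing R]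
    {F : A[X]} {y : M} (h : IsMonicGenerator E F y) :
    ∃ Δ : A, Δ ≠ 0 ∧ ∀ (φ : A →+* R) (z : R), φ Δ ≠ 0 → F.eval₂ φ z = 0 →
      (derivative F).eval₂ φ z ≠ 0 := by
  obtain ⟨Δ, hΔ, u, v, huv⟩ : ∃ Δ : A, Δ ≠ 0 ∧ ∃ u v : A[X], u * F + v * derivative F = C Δ := by
    refine exists_mul_add_mul_eq_C (E := E) ?_
    rw [← derivative_map, ← h.minpoly_eq]
    exact (minpoly.irreducible h.isIntegral).separable
  refine ⟨Δ, hΔ, fun φ z hφ hz hz' => hφ ?_⟩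
  have := congrArg (eval₂ φ z) huv
  rwa [eval₂_add, eval₂_mul, eval₂_mul, hz, hz', mul_zero, mul_zero, add_zero, eval₂_C,
    eq_comm] at this

lemma IsMonicGenerator.exists_card_fibre_le {m : ℕ} {E M : Type*} [Field E]
    [Algebra (MvPolynomial (Fin m) ℤ)[X] E] [IsFractionRing (MvPolynomial (Fin m) ℤ)[X] E]
    [Field M] [Algebra E M] {F : (MvPolynomial (Fin m) ℤ)[X][X]} {y : M}
    (h : IsMonicGenerator E F y) (hM : ¬IsConstantlyGenerated (MvPolynomial (Fin m) ℤ) E M) :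
    ∃ K : ℝ, 0 ≤ K ∧ ∃ Δ : (MvPolynomial (Fin m) ℤ)[X], Δ ≠ 0 ∧ ∀ B : ℕ, 1 ≤ B →
      ∀ x ∈ box m B, ∀ T : Finset ℤ,
        (∀ t ∈ T, |t| ≤ B ∧ evalAt x t Δ ≠ 0 ∧ SolvableAt (evalAt x t) F) →
        (T.card : ℝ) ≤ K * (√B * Real.log (B + 2)) := by
  have : CharZero E := charZero_of_injective_algebraMap
    (IsFractionRing.injective (MvPolynomial (Fin m) ℤ)[X] E)
  obtain ⟨Δ₁, hΔ₁, no_root⟩ := (exists_forall_not_solvableAt_or_solvableAt h.monic ℤ).resolve_right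
    fun hF => hM (isConstantlyGenerated_of_solvableAt h hF)
  obtain ⟨Δ₂, hΔ₂, derivative_ne_zero⟩ := h.exists_derivative_eval₂_ne_zero (R := ℤ)
  obtain ⟨k, hk⟩ := exists_forall_natDegree_coeff_le F
  obtain ⟨c, hc, root_le⟩ := exists_abs_le_pow_of_eval₂_evalAt_eq_zero h.monic
  obtain ⟨K, hK, curve_bound⟩ := exists_card_image_fst_le_sqrt_mul_log F.natDegree k hc
  refine ⟨K, hK, C Δ₁ * Δ₂, mul_ne_zero (C_ne_zero.2 hΔ₁) hΔ₂, fun B hB x hx T hT => ?_⟩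
  obtain rfl | ⟨t₀, ht₀⟩ := T.eq_empty_or_nonempty
  · have := one_le_log_add_two (Nat.one_le_cast.2 hB)
    rw [Finset.card_empty, Nat.cast_zero]
    positivity
  have hΔ₁x : MvPolynomial.eval x Δ₁ ≠ 0 := fun h0 =>
    (hT t₀ ht₀).2.1 (by rw [map_mul, evalAt_C, h0, zero_mul])
  choose! z hz using fun t ht => (hT t ht).2.2
  have curve := curve_bound B hB (F.map (mapRingHom (MvPolynomial.eval x))) (h.monic.map _)
    (h.monic.natDegree_map _) (fun j => by rw [coeff_map]; exact natDegree_map_le.trans (hk j))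
    (fun g hg => no_root _ hΔ₁x ⟨g, by rwa [eval_map] at hg⟩) (T.image fun t => (t, z t))
  rw [Finset.image_image, show (Prod.fst ∘ fun t => (t, z t)) = id from rfl,
    Finset.image_id] at curve
  refine curve ?_ ?_ <;>
    simp only [Finset.forall_mem_image, derivative_map, evalEval_map_eval] <;> intro t ht <;>
    obtain ⟨ht_le, hΔ, -⟩ := hT t ht
  · exact ⟨ht_le, (root_le B x hx t ht_le _ (hz t ht)).1, hz t ht⟩
  · exact ⟨derivative_ne_zero _ _ (right_ne_zero_of_mul (map_mul (evalAt x t) _ _ ▸ hΔ)) (hz t ht),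
      (root_le B x hx t ht_le _ (hz t ht)).2⟩

lemma evalAt_finSuccEquiv {m : ℕ} (x : Fin (m + 1) → ℤ) (P : MvPolynomial (Fin (m + 1)) ℤ) :
    evalAt (Fin.tail x) (x 0) (MvPolynomial.finSuccEquiv ℤ m P) = MvPolynomial.eval x P := by
  conv_rhs => rw [← Fin.cons_self_tail x, MvPolynomial.eval_eq_eval_mv_eval']
  rfl

open Classical in
lemma exists_card_zeros_evalAt_le {m : ℕ} {Δ : (MvPolynomial (Fin m) ℤ)[X]} (hΔ : Δ ≠ 0) :
    ∃ K : ℝ, 0 ≤ K ∧ ∀ B : ℕ, 1 ≤ B →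
      (((box (m + 1) B).filter fun x => evalAt (Fin.tail x) (x 0) Δ = 0).card : ℝ) ≤ K * B ^ m := by
  obtain ⟨P, rfl⟩ := (MvPolynomial.finSuccEquiv ℤ m).surjective Δ
  obtain ⟨K, hK, hzeros⟩ := exists_card_zeros_mul_le (P := P) (by rintro rfl; simp at hΔ)
  refine ⟨K, hK, fun B hB => le_of_mul_le_mul_right ?_ (Nat.cast_pos.2 hB)⟩
  simpa only [evalAt_finSuccEquiv, pow_succ, mul_assoc] using hzeros B hB

lemma exists_card_le_add_card_mul {m : ℕ} {Δ : (MvPolynomial (Fin m) ℤ)[X]} (hΔ : Δ ≠ 0) :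
    ∃ K : ℝ, 0 ≤ K ∧ ∀ B : ℕ, 1 ≤ B → ∀ S ⊆ box (m + 1) B, ∃ W ⊆ box m B,
      (∀ w ∈ W, ∃ t, Fin.cons t w ∈ S ∧ evalAt w t Δ ≠ 0) ∧
      ∀ b : ℝ, (∀ w ∈ W, ∀ T : Finset ℤ,
        (∀ t ∈ T, Fin.cons t w ∈ S ∧ evalAt w t Δ ≠ 0) → (T.card : ℝ) ≤ b) →
        (S.card : ℝ) ≤ K * B ^ m + W.card * b := by
  classical
  obtain ⟨K, hK, hzeros⟩ := exists_card_zeros_evalAt_le hΔ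
  refine ⟨K, hK, fun B hB S hS => ?_⟩
  let Z := S.filter fun x => evalAt (Fin.tail x) (x 0) Δ = 0
  let N := S.filter fun x => ¬evalAt (Fin.tail x) (x 0) Δ = 0
  have card_Z : (Z.card : ℝ) ≤ K * B ^ m :=
    (Nat.cast_le.2 (Finset.card_le_card (Finset.filter_subset_filter _ hS))).trans (hzeros B hB)
  refine ⟨N.image Fin.tail, ?_, ?_, fun b hb => ?_⟩
  · refine Finset.image_subset_iff.2 fun x hx => mem_box.2 fun i => ?_
    exact mem_box.1 (hS (Finset.mem_filter.1 hx).1) i.succ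
  · refine Finset.forall_mem_image.2 fun x hx => ⟨x 0, ?_⟩
    rw [Fin.cons_self_tail]
    exact Finset.mem_filter.1 hx
  have card_fibre (w) (hw : w ∈ N.image Fin.tail) :
      ((N.filter fun x => Fin.tail x = w).card : ℝ) ≤ b := by
    rw [← Finset.card_image_of_injOn (f := fun x => x 0)]
    · refine hb w hw _ (Finset.forall_mem_image.2 fun x hx => ?_)
      obtain ⟨hxN, rfl⟩ := Finset.mem_filter.1 hx
      rw [Fin.cons_self_tail]
      exact Finset.mem_filter.1 hxN
    · intro x hx x' hx' (h : x 0 = x' 0)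
      rw [← Fin.cons_self_tail x, ← Fin.cons_self_tail x', (Finset.mem_filter.1 hx).2,
        (Finset.mem_filter.1 hx').2, h]
  calc (S.card : ℝ) = Z.card + N.card :=
        mod_cast (Finset.card_filter_add_card_filter_not _).symm
    _ = Z.card + ∑ w ∈ N.image Fin.tail, ((N.filter fun x => Fin.tail x = w).card : ℝ) := by
        rw [Finset.card_eq_sum_card_image Fin.tail N, Nat.cast_sum]
    _ ≤ K * B ^ m + (N.image Fin.tail).card * b := by
        rw [← nsmul_eq_mul]
        exact add_le_add card_Z (Finset.sum_le_card_nsmul _ _ _ card_fibre)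

lemma solvableAt_map_finSuccEquiv {m : ℕ} (x : Fin (m + 1) → ℤ)
    (F : (MvPolynomial (Fin (m + 1)) ℤ)[X]) :
    SolvableAt (evalAt (Fin.tail x) (x 0))
        (F.map (MvPolynomial.finSuccEquiv ℤ m : _ →+* (MvPolynomial (Fin m) ℤ)[X])) ↔
      SolvableAt (MvPolynomial.eval x) F := by
  rw [solvableAt_map]
  exact iff_of_eq (congrArg (SolvableAt · F) (RingHom.ext (evalAt_finSuccEquiv x)))

lemma solvableAt_evalAt_map_C {m : ℕ} (x : Fin m → ℤ) (t : ℤ) (g : (MvPolynomial (Fin m) ℤ)[X]) :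
    SolvableAt (evalAt x t) (g.map C) ↔ SolvableAt (MvPolynomial.eval x) g := by
  rw [solvableAt_map]
  exact iff_of_eq (congrArg (SolvableAt · g) (RingHom.ext (evalAt_C x t)))

/-- `F` is solvable at only `O(B ^ (m - 1/2) log B)` integer points of the box of size `B`, as in
S. D. Cohen's quantitative form of Hilbert's irreducibility theorem. -/
def HasCohenBound {m : ℕ} (F : (MvPolynomial (Fin m) ℤ)[X]) : Prop :=
  ∃ K : ℝ, 0 ≤ K ∧ ∀ B : ℕ, 1 ≤ B → ∀ S ⊆ box m B, (∀ x ∈ S, SolvableAt (MvPolynomial.eval x) F) →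
    S.card * √B ≤ K * B ^ m * Real.log (B + 2)

lemma sqrt_le_mul_log_add_two {B : ℝ} (hB : 1 ≤ B) : √B ≤ B * Real.log (B + 2) :=
  ((Real.sqrt_le_left (by linarith)).2 (by nlinarith)).trans
    (le_mul_of_one_le_right (by linarith) (one_le_log_add_two hB))

namespace IsMonicGenerator

variable {m : ℕ} {E M : Type*} [Field E] [Algebra (MvPolynomial (Fin m) ℤ)[X] E]
  [IsFractionRing (MvPolynomial (Fin m) ℤ)[X] E] [Field M] [Algebra E M]

lemma hasCohenBound_of_root {F : (MvPolynomial (Fin (m + 1)) ℤ)[X]} {y : M}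
    (h : IsMonicGenerator E
      (F.map (MvPolynomial.finSuccEquiv ℤ m : _ →+* (MvPolynomial (Fin m) ℤ)[X])) y)
    {g : (MvPolynomial (Fin m) ℤ)[X]} (hg : g.Monic) (hg_bound : HasCohenBound g) {θ : M}
    (hθ : aeval θ ((g.map C).map (algebraMap (MvPolynomial (Fin m) ℤ)[X] E)) = 0) :
    HasCohenBound F := by
  obtain ⟨Kg, hKg, hg_bound⟩ := hg_bound
  obtain ⟨δ, hδ, solvable_g⟩ := h.exists_solvableAt_imp (R := ℤ) (hg.map C) hθ
  obtain ⟨K, hK, card_le⟩ := exists_card_le_add_card_mul hδ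
  refine ⟨K + 3 * Kg, by positivity, fun B hB S hS hSF => ?_⟩
  obtain ⟨W, hW, hWS, card_S⟩ := card_le B hB S hS
  have card_W : W.card * √B ≤ Kg * B ^ m * Real.log (B + 2) := by
    refine hg_bound B hB W hW fun w hw => ?_
    obtain ⟨t, ht, hδt⟩ := hWS w hw
    refine (solvableAt_evalAt_map_C w t g).1 (solvable_g _ hδt ?_)
    simpa using (solvableAt_map_finSuccEquiv (Fin.cons t w) F).2 (hSF _ ht)
  have hB' : (1 : ℝ) ≤ B := Nat.one_le_cast.2 hB
  have hlog := one_le_log_add_two hB'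
  have sqrt_le := sqrt_le_mul_log_add_two hB'
  calc S.card * √(B : ℝ) ≤ (K * B ^ m + W.card * (2 * B + 1)) * √B := by
        gcongr
        refine card_S _ fun w _ T hT => ?_
        have hT_le : T ⊆ Finset.Icc (-B : ℤ) B := fun t ht =>
          Finset.mem_Icc.2 (abs_le.1 (mem_box.1 (hS (hT t ht).1) 0))
        exact_mod_cast (Finset.card_le_card hT_le).trans (card_Icc_neg B).le
    _ = K * B ^ m * √B + W.card * √B * (2 * B + 1) := by ring
    _ ≤ K * B ^ m * (B * Real.log (B + 2)) + Kg * B ^ m * Real.log (B + 2) * (3 * B) := by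
        gcongr
        linarith
    _ = (K + 3 * Kg) * B ^ (m + 1) * Real.log (B + 2) := by ring

lemma hasCohenBound_of_not_isConstantlyGenerated {F : (MvPolynomial (Fin (m + 1)) ℤ)[X]} {y : M}
    (h : IsMonicGenerator E
      (F.map (MvPolynomial.finSuccEquiv ℤ m : _ →+* (MvPolynomial (Fin m) ℤ)[X])) y)
    (hM : ¬IsConstantlyGenerated (MvPolynomial (Fin m) ℤ) E M) : HasCohenBound F := by
  obtain ⟨K', hK', Δ, hΔ, card_fibre⟩ := h.exists_card_fibre_le hM
  obtain ⟨K, hK, card_le⟩ := exists_card_le_add_card_mul hΔ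
  refine ⟨K + 3 ^ m * K', by positivity, fun B hB S hS hSF => ?_⟩
  obtain ⟨W, hW, -, card_S⟩ := card_le B hB S hS
  have hB' : (1 : ℝ) ≤ B := Nat.one_le_cast.2 hB
  have hlog := one_le_log_add_two hB'
  have sqrt_le := sqrt_le_mul_log_add_two hB'
  have card_W : (W.card : ℝ) ≤ (3 * B) ^ m := by
    refine (Nat.cast_le.2 ((Finset.card_le_card hW).trans (card_box m B).le)).trans ?_
    push_cast
    gcongr
    linarith
  calc S.card * √(B : ℝ) ≤ (K * B ^ m + W.card * (K' * (√B * Real.log (B + 2)))) * √B := by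
        gcongr
        refine card_S _ fun w hw T hT => card_fibre B hB w (hW hw) T fun t ht => ?_
        obtain ⟨htS, hΔt⟩ := hT t ht
        refine ⟨mem_box.1 (hS htS) 0, hΔt, ?_⟩
        simpa using (solvableAt_map_finSuccEquiv (Fin.cons t w) F).2 (hSF _ htS)
    _ = K * B ^ m * √B + W.card * (K' * ((√B * √B) * Real.log (B + 2))) := by ring
    _ ≤ K * B ^ m * (B * Real.log (B + 2)) + (3 * B) ^ m * (K' * (B * Real.log (B + 2))) := by
        rw [Real.mul_self_sqrt (by positivity)]
        gcongr
    _ = (K + 3 ^ m * K') * B ^ (m + 1) * Real.log (B + 2) := by ring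

/-- The fibres over `ℤᵐ` contain `O(√B log B)` points each, and only `O(B ^ (m - 1/2) log B)` of
them contain any point at all. -/
lemma exists_card_le_mul_log_sq {F : (MvPolynomial (Fin m) ℤ)[X][X]} {y : M}
    (h : IsMonicGenerator E F y) (hM : ¬IsConstantlyGenerated (MvPolynomial (Fin m) ℤ) E M)
    {g : (MvPolynomial (Fin m) ℤ)[X]} (hg : g.Monic) (hg_bound : HasCohenBound g) {β : M}
    (hβ : aeval β ((g.map C).map (algebraMap (MvPolynomial (Fin m) ℤ)[X] E)) = 0) :
    ∃ K : ℝ, 0 ≤ K ∧ ∀ B : ℕ, 1 ≤ B → ∀ S ⊆ box (m + 1) B,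
      (∀ x ∈ S, SolvableAt (evalAt (Fin.tail x) (x 0)) F) →
      (S.card : ℝ) ≤ K * B ^ m * Real.log (B + 2) ^ 2 := by
  obtain ⟨Kg, hKg, hg_bound⟩ := hg_bound
  obtain ⟨δ, hδ, solvable_g⟩ := h.exists_solvableAt_imp (R := ℤ) (hg.map C) hβ
  obtain ⟨K', hK', Δ, hΔ, card_fibre⟩ := h.exists_card_fibre_le hM
  obtain ⟨K, hK, card_le⟩ := exists_card_le_add_card_mul (mul_ne_zero hΔ hδ)
  refine ⟨K + Kg * K', by positivity, fun B hB S hS hSF => ?_⟩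
  obtain ⟨W, hW, hWS, card_S⟩ := card_le B hB S hS
  have solvable_of_mem {t : ℤ} {w : Fin m → ℤ} (ht : (Fin.cons t w : Fin (m + 1) → ℤ) ∈ S) :
      SolvableAt (evalAt w t) F := by simpa using hSF _ ht
  simp only [map_mul, mul_ne_zero_iff] at hWS card_S
  have card_W : W.card * √B ≤ Kg * B ^ m * Real.log (B + 2) := by
    refine hg_bound B hB W hW fun w hw => ?_
    obtain ⟨t, ht, -, hδt⟩ := hWS w hw
    exact (solvableAt_evalAt_map_C w t g).1 (solvable_g _ hδt (solvable_of_mem ht))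
  have hlog := one_le_log_add_two (Nat.one_le_cast.2 hB)
  calc (S.card : ℝ) ≤ K * B ^ m + W.card * (K' * (√B * Real.log (B + 2))) :=
        card_S _ fun w hw T hT => card_fibre B hB w (hW hw) T fun t ht =>
          ⟨mem_box.1 (hS (hT t ht).1) 0, (hT t ht).2.1, solvable_of_mem (hT t ht).1⟩
    _ = K * B ^ m + W.card * √B * (K' * Real.log (B + 2)) := by ring
    _ ≤ K * B ^ m * Real.log (B + 2) ^ 2 +
          Kg * B ^ m * Real.log (B + 2) * (K' * Real.log (B + 2)) := by
        refine add_le_add (le_mul_of_one_le_right (by positivity) (one_le_pow₀ hlog)) ?_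
        gcongr
    _ = (K + Kg * K') * B ^ m * Real.log (B + 2) ^ 2 := by ring

end IsMonicGenerator

/-! ### Cohen's bound -/

lemma isMonicGenerator_adjoinSimple_gen {A E M : Type*} [CommRing A] [IsDomain A]
    [IsIntegrallyClosed A] [Field E] [Algebra A E] [IsFractionRing A E] [Field M] [Algebra E M]
    {F : A[X]} (hF : F.Monic) (hirr : Irreducible F) {y : M}
    (hy : aeval y (F.map (algebraMap A E)) = 0) :
    IsMonicGenerator E F (IntermediateField.AdjoinSimple.gen E y) where
  monic := hF
  minpoly_eq := by
    rw [IntermediateField.minpoly_gen]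
    exact (minpoly.eq_of_irreducible_of_monic
      (hF.irreducible_iff_irreducible_map_fraction_map.1 hirr) hy (hF.map _)).symm
  adjoin_eq_top := by
    apply IntermediateField.lift_injective
    rw [IntermediateField.lift_adjoin_simple, IntermediateField.lift_top,
      IntermediateField.AdjoinSimple.coe_gen]

lemma IsMonicGenerator.irreducible {A E M : Type*} [CommRing A] [IsDomain A] [Field E] [Algebra A E]
    [Field M] [Algebra E M] {F : A[X]} {y : M} (h : IsMonicGenerator E F y) : Irreducible F :=
  h.monic.irreducible_of_irreducible_map (algebraMap A E) F
    (h.minpoly_eq ▸ minpoly.irreducible h.isIntegral)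

lemma natDegree_eq_one_of_isEmpty {σ M : Type*} [IsEmpty σ] [Field M] [IsIntegrallyClosedIn ℤ M]
    {ψ : MvPolynomial σ ℤ →+* M} (hψ : Function.Injective ψ) {F : (MvPolynomial σ ℤ)[X]}
    (hF : F.Monic) (hirr : Irreducible F) {y : M} (hy : F.eval₂ ψ y = 0) : F.natDegree = 1 := by
  have ψ_eq : ψ = (algebraMap ℤ M).comp (MvPolynomial.isEmptyRingEquiv ℤ σ) :=
    MvPolynomial.ringHom_ext (by simp) isEmptyElim
  obtain ⟨a, rfl⟩ := IsIntegrallyClosedIn.algebraMap_eq_of_integral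
    (R := ℤ) ⟨F.map (MvPolynomial.isEmptyRingEquiv ℤ σ : _ →+* ℤ), hF.map _, by
      rw [eval₂_map, ← ψ_eq, hy]⟩
  by_contra hdeg
  refine hirr.not_isRoot_of_natDegree_ne_one hdeg (x := MvPolynomial.C a) (hψ ?_)
  rw [map_zero, ← hy, ← eval₂_at_apply]
  simp

/-- Either `F` has few integral roots in the fibres over `ℤᵐ`, or its root field is generated by a
root of some `g` in `m` variables, whose solvable points are few by induction. -/
lemma hasCohenBound_succ {m : ℕ} {E M : Type*} [Field E] [Algebra (MvPolynomial (Fin m) ℤ)[X] E]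
    [IsFractionRing (MvPolynomial (Fin m) ℤ)[X] E] [Field M] [Algebra E M]
    {F : (MvPolynomial (Fin (m + 1)) ℤ)[X]} (hF : F.Monic) (hirr : Irreducible F) {y : M}
    (hy : aeval y ((F.map (MvPolynomial.finSuccEquiv ℤ m : _ →+* (MvPolynomial (Fin m) ℤ)[X])).map
      (algebraMap (MvPolynomial (Fin m) ℤ)[X] E)) = 0)
    (ih : ∀ (g : (MvPolynomial (Fin m) ℤ)[X]) (θ : M), g.Monic → Irreducible g →
      g.natDegree = F.natDegree → (g.map C).eval₂
        ((algebraMap E M).comp (algebraMap (MvPolynomial (Fin m) ℤ)[X] E)) θ = 0 →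
      HasCohenBound g) :
    HasCohenBound F := by
  have h := isMonicGenerator_adjoinSimple_gen (hF.map _) ((MulEquiv.irreducible_iff
    (Polynomial.mapEquiv (MvPolynomial.finSuccEquiv ℤ m).toRingEquiv)).2 hirr) hy
  by_cases hconst : IsConstantlyGenerated (MvPolynomial (Fin m) ℤ) E E⟮y⟯
  · obtain ⟨g, θ, hθ⟩ := hconst
    have hg : g.Monic := monic_of_injective C_injective hθ.monic
    refine h.hasCohenBound_of_root hg (ih g θ hg
      (hg.irreducible_of_irreducible_map C g hθ.irreducible) ?_ ?_)
      (hθ.minpoly_eq ▸ minpoly.aeval E θ)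
    · rw [← hg.natDegree_map C, ← hθ.finrank_eq, h.finrank_eq, hF.natDegree_map]
    · have := congrArg (algebraMap E⟮y⟯ M) hθ.eval₂_eq_zero
      rwa [hom_eval₂, map_zero, ← RingHom.comp_assoc, ← IsScalarTower.algebraMap_eq] at this
  · exact h.hasCohenBound_of_not_isConstantlyGenerated hconst

lemma exists_algebra_fractionRing {A M : Type*} [CommRing A] [IsDomain A] [Field M] {ψ : A →+* M}
    (hψ : Function.Injective ψ) : ∃ _ : Algebra (FractionRing A) M,
      (algebraMap (FractionRing A) M).comp (algebraMap A (FractionRing A)) = ψ :=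
  ⟨(IsFractionRing.lift hψ).toAlgebra, RingHom.ext (IsFractionRing.lift_algebraMap hψ)⟩

theorem hasCohenBound_of_injective {M : Type*} [Field M] [IsIntegrallyClosedIn ℤ M] {m : ℕ}
    {ψ : MvPolynomial (Fin m) ℤ →+* M} (hψ : Function.Injective ψ) {F : (MvPolynomial (Fin m) ℤ)[X]}
    (hF : F.Monic) (hirr : Irreducible F) (hdeg : 2 ≤ F.natDegree) {y : M} (hy : F.eval₂ ψ y = 0) :
    HasCohenBound F := by
  induction m generalizing y with
  | zero =>
    have := natDegree_eq_one_of_isEmpty hψ hF hirr hy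
    omega
  | succ m ih =>
    let e : MvPolynomial (Fin (m + 1)) ℤ ≃+* (MvPolynomial (Fin m) ℤ)[X] :=
      (MvPolynomial.finSuccEquiv ℤ m).toRingEquiv
    have hψe : Function.Injective (ψ.comp e.symm.toRingHom) := hψ.comp e.symm.injective
    obtain ⟨_, algebraMap_eq⟩ := exists_algebra_fractionRing hψe
    refine hasCohenBound_succ (E := FractionRing (MvPolynomial (Fin m) ℤ)[X]) (y := y) hF hirr ?_
      fun g θ hg hg_irr hg_deg hθ =>
        ih (ψ := (ψ.comp e.symm.toRingHom).comp C) (hψe.comp C_injective) hg hg_irr (hg_deg ▸ hdeg)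
          (y := θ) ?_
    · rw [aeval_def, eval₂_map, eval₂_map, algebraMap_eq, ← hy]
      exact congrArg (F.eval₂ · y) (RingHom.ext fun a => congrArg ψ (e.symm_apply_apply a))
    · rwa [algebraMap_eq, eval₂_map] at hθ

lemma exists_monic_irreducible_of_eval₂_eq_zero {R M : Type*} [CommRing R] [IsDomain R]
    [IsIntegrallyClosed R] [Field M] {ρ : R →+* M} (hρ : Function.Injective ρ) {β : M}
    (hβ : ∀ a b, ρ b ≠ 0 → ρ b * β ≠ ρ a) {P : R[X]} (hP : P ≠ 0) (hPβ : P.eval₂ ρ β = 0) :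
    ∃ (g : R[X]) (β' : M), g.Monic ∧ Irreducible g ∧ 2 ≤ g.natDegree ∧ g.eval₂ ρ β' = 0 := by
  let : Algebra R M := ρ.toAlgebra
  have : FaithfulSMul R M := (faithfulSMul_iff_algebraMap_injective R M).2 hρ
  obtain ⟨r, hr, hint⟩ := IsAlgebraic.exists_integral_multiple (R := R) ⟨P, hP, hPβ⟩
  refine ⟨minpoly R (r • β), r • β, minpoly.monic hint, minpoly.irreducible hint, ?_,
    minpoly.aeval R (r • β)⟩
  rw [minpoly.two_le_natDegree_iff hint]
  rintro ⟨a, ha⟩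
  exact hβ a r ((map_ne_zero_iff ρ hρ).2 hr) ((Algebra.smul_def r β).symm.trans ha.symm)

/-! ### Constants of an extension defined by an absolutely irreducible polynomial -/

lemma exists_C_eq_of_isIntegral {σ K : Type*} [Field K] {p : MvPolynomial σ K}
    (hp : IsIntegral K p) : ∃ r, MvPolynomial.C r = p := by
  by_cases h : p = 0
  · exact ⟨0, by rw [h, MvPolynomial.C_0]⟩
  · obtain ⟨r, -, hr⟩ := MvPolynomial.isUnit_iff_eq_C_of_isReduced.1 (hp.isUnit h)
    exact ⟨r, hr.symm⟩

lemma exists_intCast_eq_of_isIntegral {σ E : Type*} [Field E] [Algebra (MvPolynomial σ ℚ) E]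
    [IsFractionRing (MvPolynomial σ ℚ) E] {x : E} (hx : IsIntegral ℤ x) : ∃ k : ℤ, (k : E) = x := by
  obtain ⟨p, rfl⟩ := IsIntegrallyClosed.isIntegral_iff.1
    (hx.tower_top : IsIntegral (MvPolynomial σ ℚ) x)
  have p_integral : IsIntegral ℤ p :=
    (isIntegral_algebraMap_iff (IsFractionRing.injective (MvPolynomial σ ℚ) E)).1 hx
  obtain ⟨r, rfl⟩ := exists_C_eq_of_isIntegral (p_integral.tower_top : IsIntegral ℚ p)
  obtain ⟨k, rfl⟩ := IsIntegrallyClosed.isIntegral_iff.1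
    ((isIntegral_algebraMap_iff (MvPolynomial.C_injective σ ℚ)).1 p_integral)
  exact ⟨k, by simp⟩

lemma exists_algebraMap_eq_of_isIntegral {L Ω : Type*} [Field L] [IsAlgClosed L] [Field Ω]
    [Algebra L Ω] {x : Ω} (hx : IsIntegral L x) : ∃ c, algebraMap L Ω c = x :=
  minpoly.mem_range_of_degree_eq_one L x
    (IsAlgClosed.degree_eq_one_of_irreducible L (minpoly.irreducible hx))

/-- After extending scalars to `E'`, the element `x` becomes a constant `c ∈ L`, so the polynomial
in `y` representing `x` is constant. -/
lemma IsMonicGenerator.exists_algebraMap_eq_of_isIntegral_int {A E M : Type*} [CommRing A] [Field E]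
    [Algebra A E] [Field M] [Algebra E M] {F : A[X]} {y : M} (h : IsMonicGenerator E F y)
    {E' : Type*} [Field E'] [Algebra E E']
    (hirr : Irreducible ((F.map (algebraMap A E)).map (algebraMap E E'))) (L : Type*) [Field L]
    [IsAlgClosed L] [Algebra L E'] {x : M} (hx : IsIntegral ℤ x) :
    ∃ a, algebraMap E M a = x := by
  have : Fact (Irreducible ((F.map (algebraMap A E)).map (algebraMap E E'))) := ⟨hirr⟩
  rw [← h.minpoly_eq] at this hirr
  set G := (minpoly E y).map (algebraMap E E') with hG
  have root_eq : aeval (AdjoinRoot.root G) (F.map (algebraMap A E)) = 0 := by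
    rw [← h.minpoly_eq, ← aeval_map_algebraMap E', ← hG, AdjoinRoot.aeval_eq, AdjoinRoot.mk_self]
  obtain ⟨Φ, hΦ⟩ := h.exists_algHom_eq root_eq
  obtain ⟨c, hc⟩ := exists_algebraMap_eq_of_isIntegral
    ((map_isIntegral_int Φ hx).tower_top : IsIntegral L (Φ x))
  obtain ⟨p₀, rfl⟩ := h.exists_aeval_eq x
  let p := p₀ %ₘ minpoly E y
  have aeval_p : aeval y p₀ = aeval y p :=
    (aeval_modByMonic_eq_self_of_root (minpoly.aeval E y)).symm
  have map_p : p.map (algebraMap E E') = C (algebraMap L E' c) := by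
    rw [← sub_eq_zero]
    by_contra hne
    refine AdjoinRoot.mk_ne_zero_of_degree_lt (f := G) ((minpoly.monic h.isIntegral).map _)
      hne ?_ ?_
    · refine (degree_sub_le _ _).trans_lt (max_lt ?_ (degree_C_le.trans_lt ?_))
      · rw [degree_map, degree_map]
        exact degree_modByMonic_lt _ (minpoly.monic h.isIntegral)
      · exact degree_pos_of_irreducible hirr
    · rw [map_sub, sub_eq_zero, AdjoinRoot.mk_C, ← AdjoinRoot.aeval_eq, aeval_map_algebraMap,
        ← hΦ, aeval_algHom_apply, ← aeval_p, ← hc]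
      rfl
  refine ⟨p.coeff 0, ?_⟩
  rw [aeval_p, eq_C_of_degree_le_zero (p := p)
    (degree_map p (algebraMap E E') ▸ map_p ▸ degree_C_le), coeff_C_zero, aeval_C]

lemma exists_algebra_irreducible_map {A B : Type*} (E E' : Type*) [CommRing A] [IsDomain A]
    [CommRing B] [IsDomain B] [IsIntegrallyClosed B] [Field E] [Algebra A E] [IsFractionRing A E]
    [Field E'] [Algebra B E'] [IsFractionRing B E'] {φ : A →+* B} (hφ : Function.Injective φ)
    {f : A[X]} (hf : f.Monic) (hirr : Irreducible (f.map φ)) :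
    ∃ _ : Algebra E E', Irreducible ((f.map (algebraMap A E)).map (algebraMap E E')) := by
  have comp_injective : Function.Injective ((algebraMap B E').comp φ) :=
    (IsFractionRing.injective B E').comp hφ
  have lift_comp : (IsFractionRing.lift comp_injective).comp (algebraMap A E) =
      (algebraMap B E').comp φ :=
    RingHom.ext fun a => IsFractionRing.lift_algebraMap comp_injective a
  refine ⟨(IsFractionRing.lift comp_injective).toAlgebra, ?_⟩
  rw [RingHom.algebraMap_toAlgebra, map_map, lift_comp, ← map_map]
  exact (hf.map φ).irreducible_iff_irreducible_map_fraction_map.1 hirr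

section

variable {σ L : Type*} [Field L] [Algebra ℚ L] {f : (MvPolynomial σ ℚ)[X]}

lemma irreducible_map_algebraMap_of_irreducible_map {E : Type*} [Field E]
    [Algebra (MvPolynomial σ ℚ) E] [IsFractionRing (MvPolynomial σ ℚ) E] (hf : f.Monic)
    (hirr : Irreducible (f.map (MvPolynomial.map (algebraMap ℚ L)))) :
    Irreducible (f.map (algebraMap (MvPolynomial σ ℚ) E)) :=
  hf.irreducible_iff_irreducible_map_fraction_map.1
    (hf.irreducible_of_irreducible_map _ _ hirr)

lemma IsMonicGenerator.isIntegrallyClosedIn_int [IsAlgClosed L] {E M : Type*} [Field E]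
    [Algebra (MvPolynomial σ ℚ) E] [IsFractionRing (MvPolynomial σ ℚ) E] [Field M] [Algebra E M]
    {y : M} (h : IsMonicGenerator E f y)
    (hirr : Irreducible (f.map (MvPolynomial.map (algebraMap ℚ L)))) :
    IsIntegrallyClosedIn ℤ M := by
  have : CharZero E := charZero_of_injective_algebraMap
    (IsFractionRing.injective (MvPolynomial σ ℚ) E)
  have : CharZero M := charZero_of_injective_algebraMap (algebraMap E M).injective
  refine isIntegrallyClosedIn_iff.2 ⟨Int.cast_injective, fun {x} hx => ?_⟩
  obtain ⟨_, irreducible_map⟩ := exists_algebra_irreducible_map E (FractionRing (MvPolynomial σ L))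
    (MvPolynomial.map_injective _ (algebraMap ℚ L).injective) h.monic hirr
  obtain ⟨a, rfl⟩ := h.exists_algebraMap_eq_of_isIntegral_int irreducible_map L hx
  obtain ⟨k, rfl⟩ := exists_intCast_eq_of_isIntegral (σ := σ)
    ((isIntegral_algebraMap_iff (algebraMap E M).injective).1 hx)
  exact ⟨k, by simp⟩

end

/-! ### Linear changes of variables -/

section LinearSubst

variable {ι R : Type*} [Fintype ι] [CommRing R]

/-- The linear substitution `Xᵢ ↦ ∑ⱼ Aᵢⱼ Xⱼ` over any commutative ring; `lsubMv` is the case of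
`ℚ`. -/
def linearSubst (A : Matrix ι ι R) : MvPolynomial ι R →ₐ[R] MvPolynomial ι R :=
  MvPolynomial.aeval fun i => ∑ j, MvPolynomial.C (A i j) * MvPolynomial.X j

lemma linearSubst_X (A : Matrix ι ι R) (i : ι) :
    linearSubst A (MvPolynomial.X i) = ∑ j, MvPolynomial.C (A i j) * MvPolynomial.X j :=
  MvPolynomial.aeval_X _ i

lemma linearSubst_comp (A B : Matrix ι ι R) :
    (linearSubst A).comp (linearSubst B) = linearSubst (B * A) := by
  refine MvPolynomial.algHom_ext fun i => ?_
  simp only [AlgHom.comp_apply, linearSubst_X, map_sum, map_mul, MvPolynomial.algHom_C,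
    MvPolynomial.algebraMap_eq, Matrix.mul_apply, Finset.sum_mul, Finset.mul_sum, mul_assoc]
  exact Finset.sum_comm

lemma linearSubst_one [DecidableEq ι] : linearSubst (1 : Matrix ι ι R) = AlgHom.id R _ := by
  refine MvPolynomial.algHom_ext fun i => ?_
  simp [linearSubst_X, Matrix.one_apply]

/-- An invertible linear substitution as an automorphism of the polynomial ring. -/
def linearSubstEquiv [DecidableEq ι] (A : Matrix ι ι R) (hA : IsUnit A.det) :
    MvPolynomial ι R ≃ₐ[R] MvPolynomial ι R :=
  AlgEquiv.ofAlgHom (linearSubst A) (linearSubst A⁻¹)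
    (by rw [linearSubst_comp, Matrix.nonsing_inv_mul _ hA, linearSubst_one])
    (by rw [linearSubst_comp, Matrix.mul_nonsing_inv _ hA, linearSubst_one])

lemma map_linearSubst {S : Type*} [CommRing S] (φ : R →+* S) (A : Matrix ι ι R)
    (p : MvPolynomial ι R) :
    MvPolynomial.map φ (linearSubst A p) = linearSubst (A.map φ) (MvPolynomial.map φ p) := by
  induction p using MvPolynomial.induction_on with
  | C r => simp [MvPolynomial.algHom_C]
  | add p q hp hq => simp only [map_add, hp, hq]
  | mul_X p i hp => simp [hp, linearSubst_X]

lemma eval_linearSubst (x : ι → R) (A : Matrix ι ι R) (p : MvPolynomial ι R) :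
    MvPolynomial.eval x (linearSubst A p) = MvPolynomial.eval (A.mulVec x) p := by
  induction p using MvPolynomial.induction_on with
  | C r => simp [MvPolynomial.algHom_C]
  | add p q hp hq => simp only [map_add, hp, hq]
  | mul_X p i hp => simp [hp, linearSubst_X, Matrix.mulVec, dotProduct]

lemma linearSubst_injective [IsDomain R] [DecidableEq ι] {A : Matrix ι ι R} (hA : A.det ≠ 0) :
    Function.Injective (linearSubst A) := by
  have algebraMap_injective := FaithfulSMul.algebraMap_injective R (FractionRing R)
  have det_ne_zero : (A.map (algebraMap R (FractionRing R))).det ≠ 0 := by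
    rw [← RingHom.mapMatrix_apply, ← RingHom.map_det]
    exact (map_ne_zero_iff _ algebraMap_injective).2 hA
  intro p q hpq
  refine MvPolynomial.map_injective _ algebraMap_injective
    ((linearSubstEquiv _ det_ne_zero.isUnit).injective ?_)
  change linearSubst _ _ = linearSubst _ _
  rw [← map_linearSubst, ← map_linearSubst, hpq]

end LinearSubst

lemma irreducible_map_applyGL {n : ℕ} {F : (MvPolynomial (Fin n) ℤ)[X]} (hF : AbsIrred F)
    {σ : Matrix (Fin n) (Fin n) ℚ} (hσ : IsUnit σ.det) :
    Irreducible ((applyGL σ (toQ F)).map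
      (MvPolynomial.map (algebraMap ℚ (AlgebraicClosure ℚ)))) := by
  have det_isUnit : IsUnit (σ.map (algebraMap ℚ (AlgebraicClosure ℚ))).det := by
    rw [← RingHom.mapMatrix_apply, ← RingHom.map_det]
    exact hσ.map _
  have map_applyGL : (applyGL σ (toQ F)).map
      (MvPolynomial.map (algebraMap ℚ (AlgebraicClosure ℚ))) =
        mapEquiv (linearSubstEquiv _ det_isUnit).toRingEquiv
          (F.map (MvPolynomial.map (Int.castRingHom (AlgebraicClosure ℚ)))) := by
    change _ = Polynomial.map _ _
    rw [applyGL, toQ, map_map, map_map, map_map]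
    congr 1
    refine RingHom.ext fun p => (map_linearSubst _ σ _).trans ?_
    rw [MvPolynomial.map_map, RingHom.ext_int ((algebraMap ℚ _).comp (Int.castRingHom ℚ))
      (Int.castRingHom (AlgebraicClosure ℚ))]
    rfl
  rw [map_applyGL, MulEquiv.irreducible_iff]
  exact hF

/-- The matrix is an integral multiple of `P σ⁻¹`, with `P` the matrix of `π`. -/
lemma exists_map_mul_eq_smul_submatrix {ι : Type*} [Fintype ι] [DecidableEq ι]
    {σ : Matrix ι ι ℚ} (hσ : IsUnit σ.det) (π : Equiv.Perm ι) :
    ∃ (S : Matrix ι ι ℤ) (N : ℤ), S.det ≠ 0 ∧ N ≠ 0 ∧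
      S.map (Int.castRingHom ℚ) * σ = (N : ℚ) • (1 : Matrix ι ι ℚ).submatrix π id := by
  set T := (1 : Matrix ι ι ℚ).submatrix π id * σ⁻¹ with hT
  obtain ⟨⟨N, hN⟩, isInteger⟩ := IsLocalization.exist_integer_multiples_of_finite
    (nonZeroDivisors ℤ) fun k : ι × ι => T k.1 k.2
  have N_ne_zero : N ≠ 0 := nonZeroDivisors.ne_zero hN
  choose S hS using isInteger
  have map_eq : (Matrix.of fun k j => S (k, j)).map (Int.castRingHom ℚ) = (N : ℚ) • T :=
    Matrix.ext fun k j => (hS (k, j)).trans (zsmul_eq_mul _ _)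
  have mul_eq : (Matrix.of fun k j => S (k, j)).map (Int.castRingHom ℚ) * σ =
      (N : ℚ) • (1 : Matrix ι ι ℚ).submatrix π id := by
    rw [map_eq, hT, Matrix.smul_mul, Matrix.mul_assoc, Matrix.nonsing_inv_mul _ hσ, Matrix.mul_one]
  refine ⟨Matrix.of fun k j => S (k, j), N, fun h => ?_, N_ne_zero, mul_eq⟩
  have det_eq := congrArg Matrix.det mul_eq
  rw [Matrix.det_mul, ← RingHom.mapMatrix_apply, ← RingHom.map_det, h, map_zero, zero_mul,
    Matrix.det_smul, Matrix.det_permute, Matrix.det_one, mul_one] at det_eq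
  exact mul_ne_zero (pow_ne_zero _ (Int.cast_ne_zero.2 N_ne_zero))
    (Int.cast_ne_zero.2 (Equiv.Perm.sign π).ne_zero) det_eq.symm

/-- The ring homomorphism `ℤ[X] → E ⊇ ℚ[X]`, `p ↦ p(σ(X))`, sending the coefficients of `F` to those
of `F_σ`. -/
def substHom {n : ℕ} (E : Type*) [CommRing E] [Algebra (MvPolynomial (Fin n) ℚ) E]
    (σ : Matrix (Fin n) (Fin n) ℚ) : MvPolynomial (Fin n) ℤ →+* E :=
  (algebraMap (MvPolynomial (Fin n) ℚ) E).comp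
    ((lsubMv σ).comp (MvPolynomial.map (Int.castRingHom ℚ)))

section SubstHom

variable {n : ℕ} {E : Type*} [Field E] [Algebra (MvPolynomial (Fin n) ℚ) E]
  {σ : Matrix (Fin n) (Fin n) ℚ}

lemma map_algebraMap_applyGL (σ : Matrix (Fin n) (Fin n) ℚ) (F : (MvPolynomial (Fin n) ℤ)[X]) :
    (applyGL σ (toQ F)).map (algebraMap (MvPolynomial (Fin n) ℚ) E) = F.map (substHom E σ) := by
  rw [applyGL, toQ, map_map, map_map, substHom, RingHom.comp_assoc]

lemma substHom_injective [IsFractionRing (MvPolynomial (Fin n) ℚ) E] (hσ : IsUnit σ.det) :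
    Function.Injective (substHom E σ) :=
  (IsFractionRing.injective (MvPolynomial (Fin n) ℚ) E).comp
    ((linearSubstEquiv σ hσ).injective.comp (MvPolynomial.map_injective _ Int.cast_injective))

lemma substHom_linearSubst_X {S : Matrix (Fin n) (Fin n) ℤ} {N : ℤ} {π : Equiv.Perm (Fin n)}
    (h : S.map (Int.castRingHom ℚ) * σ = (N : ℚ) • (1 : Matrix (Fin n) (Fin n) ℚ).submatrix π id)
    (k : Fin n) :
    substHom E σ (linearSubst S (MvPolynomial.X k)) =
      N * algebraMap (MvPolynomial (Fin n) ℚ) E (MvPolynomial.X (π k)) := by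
  have lsubMv_eq : lsubMv σ (MvPolynomial.map (Int.castRingHom ℚ)
      (linearSubst S (MvPolynomial.X k))) =
        (N : MvPolynomial (Fin n) ℚ) * MvPolynomial.X (π k) := by
    rw [map_linearSubst, MvPolynomial.map_X]
    change linearSubst σ (linearSubst _ _) = _
    rw [← AlgHom.comp_apply, linearSubst_comp, h, linearSubst_X]
    simp [Matrix.one_apply, apply_ite (MvPolynomial.C (σ := Fin n))]
  rw [substHom, RingHom.comp_apply, RingHom.comp_apply, lsubMv_eq, map_mul, map_intCast]

end SubstHom

lemma algebraMap_rename_mem {σ τ E : Type*} [Field E] [Algebra (MvPolynomial σ ℚ) E]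
    (K : Subfield E) {f : τ → σ}
    (hf : ∀ k, algebraMap (MvPolynomial σ ℚ) E (MvPolynomial.X (f k)) ∈ K)
    (p : MvPolynomial τ ℚ) : algebraMap (MvPolynomial σ ℚ) E (MvPolynomial.rename f p) ∈ K := by
  induction p using MvPolynomial.induction_on with
  | C r =>
    rw [MvPolynomial.rename_C, ← RingHom.comp_apply, eq_ratCast]
    exact SubfieldClass.ratCast_mem K r
  | add p q hp hq => simpa only [map_add] using add_mem hp hq
  | mul_X p i hp => simpa only [map_mul, MvPolynomial.rename_X] using mul_mem hp (hf i)

lemma isFractionRing_of_X_mem {σ A E : Type*} [Field E] [Algebra (MvPolynomial σ ℚ) E]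
    [IsFractionRing (MvPolynomial σ ℚ) E] [CommRing A] [Algebra A E] [FaithfulSMul A E]
    (h : ∀ j, algebraMap (MvPolynomial σ ℚ) E (MvPolynomial.X j) ∈
      Subfield.closure (algebraMap A E).range) : IsFractionRing A E := by
  have algebraMap_mem (p : MvPolynomial σ ℚ) :
      algebraMap (MvPolynomial σ ℚ) E p ∈ Subfield.closure ((algebraMap A E).range : Set E) :=
    MvPolynomial.rename_id_apply p ▸ algebraMap_rename_mem _ h p
  refine IsFractionRing.of_field A E fun z => ?_
  obtain ⟨p, q, -, rfl⟩ := IsFractionRing.div_surjective (A := MvPolynomial σ ℚ) z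
  have div_mem := div_mem (algebraMap_mem p) (algebraMap_mem q)
  simp only [Subfield.mem_closure_iff, Subring.closure_eq] at div_mem
  obtain ⟨_, ⟨a, rfl⟩, _, ⟨b, rfl⟩, h⟩ := div_mem
  exact ⟨a, b, h.symm⟩

/-- In the new coordinates the variable `i` plays the role of `T` in `ℤ[X₁, …, Xₘ][T]`. -/
lemma exists_isFractionRing_linearSubst {m : ℕ} {E : Type*} [Field E]
    [Algebra (MvPolynomial (Fin (m + 1)) ℚ) E] [IsFractionRing (MvPolynomial (Fin (m + 1)) ℚ) E]
    {σ : Matrix (Fin (m + 1)) (Fin (m + 1)) ℚ} (hσ : IsUnit σ.det) (i : Fin (m + 1)) :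
    ∃ (S : Matrix (Fin (m + 1)) (Fin (m + 1)) ℤ) (N : ℤ)
      (_ : Algebra (MvPolynomial (Fin m) ℤ)[X] E), S.det ≠ 0 ∧ N ≠ 0 ∧
      IsFractionRing (MvPolynomial (Fin m) ℤ)[X] E ∧
      (∀ p, substHom E σ (linearSubst S p) =
        algebraMap (MvPolynomial (Fin m) ℤ)[X] E (MvPolynomial.finSuccEquiv ℤ m p)) ∧
      ∀ k, algebraMap (MvPolynomial (Fin m) ℤ)[X] E (C (MvPolynomial.X k)) =
        N * algebraMap (MvPolynomial (Fin (m + 1)) ℚ) E (MvPolynomial.X (i.succAbove k)) := by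
  obtain ⟨S, N, hS, hN, hSN⟩ := exists_map_mul_eq_smul_submatrix hσ i.cycleRange.symm
  let e := MvPolynomial.finSuccEquiv ℤ m
  let α : (MvPolynomial (Fin m) ℤ)[X] →+* E :=
    ((substHom E σ).comp (linearSubst S).toRingHom).comp e.symm.toRingHom
  have α_injective : Function.Injective α :=
    (substHom_injective hσ).comp ((linearSubst_injective hS).comp e.symm.injective)
  have α_apply (p : MvPolynomial (Fin (m + 1)) ℤ) : substHom E σ (linearSubst S p) = α (e p) :=
    congrArg (fun p => substHom E σ (linearSubst S p)) (e.symm_apply_apply p).symm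
  have α_X (k : Fin (m + 1)) := (α_apply _).symm.trans (substHom_linearSubst_X (E := E) hSN k)
  have : CharZero E := charZero_of_injective_algebraMap
    (IsFractionRing.injective (MvPolynomial (Fin (m + 1)) ℚ) E)
  let := α.toAlgebra
  have := (faithfulSMul_iff_algebraMap_injective (MvPolynomial (Fin m) ℤ)[X] E).2 α_injective
  refine ⟨S, N, α.toAlgebra, hS, hN, isFractionRing_of_X_mem (σ := Fin (m + 1))
    fun j => ?_, α_apply, fun k => ?_⟩
  · have α_X_cycleRange := α_X (i.cycleRange j)
    rw [Equiv.symm_apply_apply] at α_X_cycleRange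
    rw [eq_div_of_mul_eq (Int.cast_ne_zero.2 hN) ((mul_comm _ _).trans α_X_cycleRange.symm)]
    exact div_mem (Subfield.subset_closure ⟨_, rfl⟩) (intCast_mem _ N)
  · have α_X_succ := α_X k.succ
    rwa [MvPolynomial.finSuccEquiv_X_succ, Fin.cycleRange_symm_succ] at α_X_succ

/-! ### Presentations missing a variable -/

lemma degX_eq_zero_iff {n : ℕ} {G : (MvPolynomial (Fin n) ℤ)[X]} {i : Fin n} :
    degX G i = 0 ↔ ∀ k, (G.coeff k).degreeOf i = 0 := by
  rw [degX, ← Nat.bot_eq_zero, Finset.sup_eq_bot_iff]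
  refine forall_congr' fun k => ⟨fun h => ?_, fun h _ => h⟩
  by_cases hk : k ∈ G.support
  · exact h hk
  · rw [notMem_support_iff.1 hk, MvPolynomial.degreeOf_zero, Nat.bot_eq_zero]

lemma degreeOf_eq_zero_iff_mem_range_rename {R : Type*} [CommRing R] {m : ℕ} {i : Fin (m + 1)}
    {p : MvPolynomial (Fin (m + 1)) R} :
    p.degreeOf i = 0 ↔ ∃ q, MvPolynomial.rename i.succAbove q = p := by
  rw [← not_ne_iff, ← MvPolynomial.mem_vars_iff_degreeOf_ne_zero]
  constructor
  · intro hi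
    refine MvPolynomial.exists_rename_eq_of_vars_subset_range p _
      Fin.succAbove_right_injective fun j hj => ?_
    rw [Fin.range_succAbove]
    exact ne_of_mem_of_not_mem hj hi
  · rintro ⟨q, rfl⟩ hi
    obtain ⟨k, -, hk⟩ := MvPolynomial.mem_vars_rename _ _ hi
    exact i.succAbove_ne k hk

lemma exists_ne_zero_aeval_map_eq_zero_of_coeff_mem {R E M : Type*} [CommRing R] [IsDomain R]
    [Field E] [Ring M] [Algebra E M] {ρ : R →+* E} (hρ : Function.Injective ρ) {p : E[X]}
    (hp : p ≠ 0) (hp_coeff : ∀ k, p.coeff k ∈ Subfield.closure (ρ.range : Set E)) {β : M}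
    (hβ : aeval β p = 0) : ∃ Q : R[X], Q ≠ 0 ∧ aeval β (Q.map ρ) = 0 := by
  let φ : FractionRing R →+* E := IsFractionRing.lift hρ
  have φ_comp : φ.comp (algebraMap R (FractionRing R)) = ρ :=
    RingHom.ext (IsFractionRing.lift_algebraMap hρ)
  obtain ⟨q, rfl⟩ := (mem_lifts p).1 <| (lifts_iff_coeff_lifts (f := φ) p).2 fun k => by
    have mem_fieldRange := hp_coeff k
    rwa [← IsFractionRing.lift_fieldRange (K := FractionRing R) hρ] at mem_fieldRange
  obtain ⟨d, hd, Q, hQ⟩ := exists_map_algebraMap_eq_C_mul R q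
  refine ⟨Q, ?_, ?_⟩
  · rintro rfl
    rw [Polynomial.map_zero, eq_comm, mul_eq_zero, C_eq_zero] at hQ
    exact hQ.elim ((map_ne_zero_iff _ (IsFractionRing.injective R (FractionRing R))).2 hd)
      (by rintro rfl; simp at hp)
  · rw [← φ_comp, ← map_map, hQ, Polynomial.map_mul, map_mul, hβ, mul_zero]

lemma IsMonicGenerator.nonempty_algEquiv {A E M : Type*} [CommRing A] [Field E] [Algebra A E]
    [Field M] [Algebra E M] {F : A[X]} {y : M} (h : IsMonicGenerator E F y) :
    Nonempty (AdjoinRoot (F.map (algebraMap A E)) ≃ₐ[E] M) :=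
  ⟨h.minpoly_eq ▸ (IntermediateField.adjoinRootEquivAdjoin E h.isIntegral).trans
    ((IntermediateField.equivOfEq h.adjoin_eq_top).trans IntermediateField.topEquiv)⟩

section MissingVariable

variable {m : ℕ} {E : Type*} [Field E] [Algebra (MvPolynomial (Fin (m + 1)) ℚ) E]
  [Algebra (MvPolynomial (Fin m) ℤ)[X] E] {N : ℤ} {i : Fin (m + 1)}

lemma exists_coeff_algebraMap_eq
    (hX : ∀ k, algebraMap (MvPolynomial (Fin m) ℤ)[X] E (C (MvPolynomial.X k)) =
      N * algebraMap (MvPolynomial (Fin (m + 1)) ℚ) E (MvPolynomial.X (i.succAbove k))) :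
    ∃ χ : MvPolynomial (Fin m) ℤ →+* MvPolynomial (Fin (m + 1)) ℤ,
      (∀ a, (χ a).degreeOf i = 0) ∧
        ((algebraMap (MvPolynomial (Fin (m + 1)) ℚ) E).comp
          (MvPolynomial.map (Int.castRingHom ℚ))).comp χ =
            (algebraMap (MvPolynomial (Fin m) ℤ)[X] E).comp C := by
  refine ⟨(MvPolynomial.rename i.succAbove).toRingHom.comp
    (MvPolynomial.aeval fun k => MvPolynomial.C N * MvPolynomial.X k).toRingHom,
    fun a => degreeOf_eq_zero_iff_mem_range_rename.2 ⟨_, rfl⟩,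
    MvPolynomial.ringHom_ext (fun r => ?_) fun k => ?_⟩
  · simp
  · simp [hX]

lemma not_isConstantlyGenerated {M : Type*} [Field M] [Algebra E M]
    (hX : ∀ k, algebraMap (MvPolynomial (Fin m) ℤ)[X] E (C (MvPolynomial.X k)) =
      N * algebraMap (MvPolynomial (Fin (m + 1)) ℚ) E (MvPolynomial.X (i.succAbove k)))
    (hM : ∀ G : (MvPolynomial (Fin (m + 1)) ℤ)[X],
      Irreducible ((toQ G).map (algebraMap (MvPolynomial (Fin (m + 1)) ℚ) E)) →
      Nonempty (AdjoinRoot ((toQ G).map (algebraMap (MvPolynomial (Fin (m + 1)) ℚ) E)) ≃ₐ[E] M) →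
      degX G i ≠ 0) :
    ¬IsConstantlyGenerated (MvPolynomial (Fin m) ℤ) E M := by
  rintro ⟨g, θ, hθ⟩
  obtain ⟨χ, degreeOf_χ, comp_χ⟩ := exists_coeff_algebraMap_eq hX
  have map_eq : (toQ (g.map χ)).map (algebraMap (MvPolynomial (Fin (m + 1)) ℚ) E) =
      (g.map C).map (algebraMap (MvPolynomial (Fin m) ℤ)[X] E) := by
    rw [toQ, map_map, map_map, comp_χ, map_map]
  refine hM (g.map χ) ?_ ?_ (degX_eq_zero_iff.2 fun k => coeff_map χ k ▸ degreeOf_χ _)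
  · rw [map_eq, ← hθ.minpoly_eq]
    exact minpoly.irreducible hθ.isIntegral
  · rw [map_eq]
    exact hθ.nonempty_algEquiv

lemma exists_ne_zero_aeval_map_eq_zero_of_degX_eq_zero
    [IsFractionRing (MvPolynomial (Fin (m + 1)) ℚ) E] [FaithfulSMul (MvPolynomial (Fin m) ℤ)[X] E]
    {M : Type*} [Ring M] [Algebra E M] (hN : N ≠ 0)
    (hX : ∀ k, algebraMap (MvPolynomial (Fin m) ℤ)[X] E (C (MvPolynomial.X k)) =
      N * algebraMap (MvPolynomial (Fin (m + 1)) ℚ) E (MvPolynomial.X (i.succAbove k)))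
    {G : (MvPolynomial (Fin (m + 1)) ℤ)[X]} (hGi : degX G i = 0)
    (hG : (toQ G).map (algebraMap (MvPolynomial (Fin (m + 1)) ℚ) E) ≠ 0) {β : M}
    (hβ : aeval β ((toQ G).map (algebraMap (MvPolynomial (Fin (m + 1)) ℚ) E)) = 0) :
    ∃ Q : (MvPolynomial (Fin m) ℤ)[X], Q ≠ 0 ∧
      aeval β (Q.map ((algebraMap (MvPolynomial (Fin m) ℤ)[X] E).comp C)) = 0 := by
  have : CharZero E := charZero_of_injective_algebraMap
    (IsFractionRing.injective (MvPolynomial (Fin (m + 1)) ℚ) E)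
  have ρ_injective : Function.Injective ((algebraMap (MvPolynomial (Fin m) ℤ)[X] E).comp C) :=
    (FaithfulSMul.algebraMap_injective _ E).comp C_injective
  refine exists_ne_zero_aeval_map_eq_zero_of_coeff_mem ρ_injective hG (fun j => ?_) hβ
  obtain ⟨q, hq⟩ := degreeOf_eq_zero_iff_mem_range_rename.1 (degX_eq_zero_iff.1 hGi j)
  rw [coeff_map, toQ, coeff_map, ← hq, MvPolynomial.map_rename]
  refine algebraMap_rename_mem _ (fun k => ?_) _
  rw [eq_div_of_mul_eq (Int.cast_ne_zero.2 hN) ((mul_comm _ _).trans (hX k).symm)]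
  exact div_mem (Subfield.subset_closure ⟨MvPolynomial.X k, rfl⟩) (intCast_mem _ N)

end MissingVariable

lemma exists_adjoin_eq_top_of_algEquiv {E L : Type*} [Field E] [Field L] [Algebra E L] {q : E[X]}
    (hq : Irreducible q) (e : AdjoinRoot q ≃ₐ[E] L) : ∃ θ : L, aeval θ q = 0 ∧ E⟮θ⟯ = ⊤ := by
  have : Fact (Irreducible q) := ⟨hq⟩
  refine ⟨e (AdjoinRoot.root q), ?_, ?_⟩
  · rw [aeval_algHom_apply e, AdjoinRoot.aeval_eq, AdjoinRoot.mk_self, map_zero]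
  · rw [← Set.image_singleton, ← AlgEquiv.coe_toAlgHom, ← IntermediateField.adjoin_map,
      IntermediateField.adjoin_root_eq_top, ← AlgHom.fieldRange_eq_map,
      AlgHom.fieldRange_eq_top.2 e.surjective]

lemma coe_notMem_range_of_adjoin_eq_top {E M : Type*} [Field E] [Field M] [Algebra E M]
    {M' : IntermediateField E M} (hM' : M' ≠ ⊥) {θ : M'} (hθ : E⟮θ⟯ = ⊤) :
    (θ : M) ∉ (algebraMap E M).range := by
  rintro ⟨a, ha⟩
  have θ_mem_bot : θ ∈ (⊥ : IntermediateField E M') := ⟨a, Subtype.ext ha⟩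
  rw [IntermediateField.adjoin_simple_eq_bot_iff.2 θ_mem_bot] at hθ
  exact hM' (by rw [← IntermediateField.lift_top E M', ← hθ, IntermediateField.lift_bot])

lemma exists_isMonicGenerator_smul (A : Type*) {E M : Type*} [CommRing A] [IsDomain A]
    [IsIntegrallyClosed A] [Field E] [Algebra A E] [IsFractionRing A E] [Field M] [Algebra E M]
    {y : M} (hy : IsIntegral E y) (htop : E⟮y⟯ = ⊤) :
    ∃ d : A, d ≠ 0 ∧ ∃ P : A[X], IsMonicGenerator E P (algebraMap A E d • y) := by
  let : Algebra A M := ((algebraMap E M).comp (algebraMap A E)).toAlgebra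
  have : IsScalarTower A E M := .of_algebraMap_eq' rfl
  obtain ⟨d, hd, d_smul_integral⟩ :=
    ((IsFractionRing.isAlgebraic_iff A E M).2 hy.isAlgebraic).exists_integral_multiple
  have hd' : algebraMap A E d ≠ 0 := (map_ne_zero_iff _ (IsFractionRing.injective A E)).2 hd
  rw [← algebraMap_smul E] at d_smul_integral
  refine ⟨d, hd, minpoly A (algebraMap A E d • y), minpoly.monic d_smul_integral,
    minpoly.isIntegrallyClosed_eq_field_fractions' E d_smul_integral, ?_⟩
  refine top_unique (htop.ge.trans (IntermediateField.adjoin_simple_le_iff.2 ?_))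
  have mem := IntermediateField.smul_mem E⟮algebraMap A E d • y⟯ (x := (algebraMap A E d)⁻¹)
    (IntermediateField.mem_adjoin_simple_self E _)
  rwa [inv_smul_smul₀ hd'] at mem

/-- A root `y` of `F` becomes integral over a smaller ring `A` of coordinates after it is multiplied
by a suitable `d ∈ A`, which preserves integral solutions. -/
lemma exists_isMonicGenerator_solvableAt_comp {A B E M R : Type*} [CommRing A] [IsDomain A]
    [IsIntegrallyClosed A] [CommRing B] [Nontrivial B] [Field E] [Algebra A E] [IsFractionRing A E]
    [Field M] [Algebra E M] [CommRing R] {l : B →+* E} (hl : Function.Injective l) {μ : A →+* B}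
    (hμ : l.comp μ = algebraMap A E) {F : B[X]} (hF : F.Monic) {y : M}
    (hmin : minpoly E y = F.map l) (htop : E⟮y⟯ = ⊤) :
    ∃ (P : A[X]) (y' : M), IsMonicGenerator E P y' ∧
      ∀ φ : B →+* R, SolvableAt φ F → SolvableAt (φ.comp μ) P := by
  have hy : IsIntegral E y := minpoly.ne_zero_iff.1 (hmin ▸ (hF.map l).ne_zero)
  obtain ⟨d, hd, P, hP⟩ := exists_isMonicGenerator_smul A hy htop
  have hd' : algebraMap A E d ≠ 0 := (map_ne_zero_iff _ (IsFractionRing.injective A E)).2 hd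
  have map_P : P.map μ = F.scaleRoots (μ d) := by
    apply map_injective l hl
    rw [map_map, hμ, ← hP.minpoly_eq, IsIntegrallyClosed.minpoly_smul hd' hy, hmin,
      map_scaleRoots_of_monic hF, ← hμ, RingHom.comp_apply]
  refine ⟨P, _, hP, fun φ ⟨z, hz⟩ => (solvableAt_map φ μ P).1 ?_⟩
  rw [map_P]
  exact ⟨φ (μ d) * z, scaleRoots_eval₂_eq_zero φ hz⟩

/-! ### Counting points after a linear change of variables -/

lemma NFB_eq_card {n : ℕ} (F : (MvPolynomial (Fin n) ℤ)[X]) {B : ℝ} (hB : 0 ≤ B) :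
    open Classical in
    NFB F B = ((box n ⌊B⌋₊).filter fun x => SolvableAt (MvPolynomial.eval x) F).card := by
  classical
  rw [NFB, ← Set.ncard_coe_finset]
  congr 1
  ext x
  have abs_le_iff (i : Fin n) : |(x i : ℝ)| ≤ B ↔ |x i| ≤ ⌊B⌋₊ := by
    rw [Int.abs_eq_natAbs, Nat.cast_le, Nat.le_floor_iff hB, Nat.cast_natAbs, Int.cast_abs]
  rw [Finset.mem_coe, Finset.mem_filter]
  simp [mem_box, abs_le_iff, SolvableAt, eval_map]

lemma mulVec_mem_box {n B c : ℕ} {S : Matrix (Fin n) (Fin n) ℤ} (hS : n * matNorm S ≤ c)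
    {x : Fin n → ℤ} (hx : x ∈ box n B) : S.mulVec x ∈ box n (c * B) := by
  refine mem_box.2 fun k => ?_
  have abs_le_matNorm (j : Fin n) : |S k j| ≤ matNorm S := by
    rw [Int.abs_eq_natAbs, Nat.cast_le]
    exact Finset.le_sup (f := fun p : Fin n × Fin n => (S p.1 p.2).natAbs) (Finset.mem_univ (k, j))
  calc |∑ j, S k j * x j| ≤ ∑ j, |S k j * x j| := Finset.abs_sum_le_sum_abs _ _
    _ ≤ ∑ _j : Fin n, (matNorm S * B : ℤ) := by
      gcongr with j
      rw [abs_mul]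
      exact mul_le_mul (abs_le_matNorm j) (mem_box.1 hx j) (abs_nonneg _) (Nat.cast_nonneg _)
    _ = (n * matNorm S * B : ℕ) := by simp [mul_assoc]
    _ ≤ (c * B : ℕ) := by gcongr

lemma exists_forall_floor_mul_le (c m : ℕ) {K : ℝ} (hK : 0 ≤ K) :
    ∃ C : ℝ, 0 < C ∧ ∀ B : ℝ, 1 ≤ B →
      K * ((c * ⌊B⌋₊ : ℕ) : ℝ) ^ m * Real.log ((c * ⌊B⌋₊ : ℕ) + 2) ^ 2 ≤
        C * B ^ m * Real.log (B + 2) ^ 2 := by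
  have log_nonneg : 0 ≤ Real.log (c + 1) := Real.log_nonneg (by simp)
  refine ⟨K * c ^ m * (Real.log (c + 1) + 1) ^ 2 + 1, by positivity, fun B hB => ?_⟩
  have floor_le : (⌊B⌋₊ : ℝ) ≤ B := Nat.floor_le (by linarith)
  have log_le : Real.log ((c * ⌊B⌋₊ : ℕ) + 2) ≤ (Real.log (c + 1) + 1) * Real.log (B + 2) := by
    have := one_le_log_add_two hB
    calc Real.log ((c * ⌊B⌋₊ : ℕ) + 2) ≤ Real.log ((c + 1) * (B + 2)) := by
          refine Real.log_le_log (by positivity) ?_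
          push_cast
          nlinarith [mul_le_mul_of_nonneg_left floor_le c.cast_nonneg (α := ℝ)]
      _ = Real.log (c + 1) + Real.log (B + 2) := Real.log_mul (by positivity) (by positivity)
      _ ≤ (Real.log (c + 1) + 1) * Real.log (B + 2) := by nlinarith
  calc K * ((c * ⌊B⌋₊ : ℕ) : ℝ) ^ m * Real.log ((c * ⌊B⌋₊ : ℕ) + 2) ^ 2
    _ ≤ K * (c * B) ^ m * ((Real.log (c + 1) + 1) * Real.log (B + 2)) ^ 2 := by
      have : 0 ≤ Real.log ((c * ⌊B⌋₊ : ℕ) + 2) :=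
        Real.log_nonneg (by linarith [(c * ⌊B⌋₊).cast_nonneg (α := ℝ)])
      gcongr
      rw [Nat.cast_mul]
      gcongr
    _ = K * c ^ m * (Real.log (c + 1) + 1) ^ 2 * B ^ m * Real.log (B + 2) ^ 2 := by ring
    _ ≤ (K * c ^ m * (Real.log (c + 1) + 1) ^ 2 + 1) * B ^ m * Real.log (B + 2) ^ 2 := by
      gcongr
      linarith

lemma exists_NFB_le_of_mulVec {n m : ℕ} {S : Matrix (Fin n) (Fin n) ℤ} (hS : S.det ≠ 0)
    {F : (MvPolynomial (Fin n) ℤ)[X]} {p : (Fin n → ℤ) → Prop}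
    (hFp : ∀ x, SolvableAt (MvPolynomial.eval x) F → p (S.mulVec x)) {K : ℝ} (hK : 0 ≤ K)
    (hp : ∀ B : ℕ, 1 ≤ B → ∀ T ⊆ box n B, (∀ w ∈ T, p w) →
      (T.card : ℝ) ≤ K * B ^ m * Real.log (B + 2) ^ 2) :
    ∃ C : ℝ, 0 < C ∧ ∀ B : ℝ, 1 ≤ B → (NFB F B : ℝ) ≤ C * B ^ m * Real.log (B + 2) ^ 2 := by
  classical
  obtain ⟨C, hC, floor_mul_le⟩ := exists_forall_floor_mul_le (n * matNorm S + 1) m hK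
  refine ⟨C, hC, fun B hB => le_trans ?_ (floor_mul_le B hB)⟩
  rw [NFB_eq_card F (by linarith),
    ← Finset.card_image_of_injective _ (Matrix.mulVec_injective_of_det_ne_zero hS)]
  refine hp _ (Nat.mul_pos (Nat.succ_pos _) (Nat.floor_pos.2 hB)) _ (fun w hw => ?_) fun w hw => ?_
  · obtain ⟨x, hx, rfl⟩ := Finset.mem_image.1 hw
    exact mulVec_mem_box (Nat.le_succ _) (Finset.mem_filter.1 hx).1
  · obtain ⟨x, hx, rfl⟩ := Finset.mem_image.1 hw
    exact hFp x (Finset.mem_filter.1 hx).2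

section ReducedGenerator

variable {m : ℕ} {E M : Type*} [Field E] [Algebra (MvPolynomial (Fin m) ℤ)[X] E]
  [IsFractionRing (MvPolynomial (Fin m) ℤ)[X] E] [Field M] [Algebra E M]
  {l : MvPolynomial (Fin (m + 1)) ℤ →+* E} {F : (MvPolynomial (Fin (m + 1)) ℤ)[X]} {y : M}
  {S : Matrix (Fin (m + 1)) (Fin (m + 1)) ℤ}

lemma exists_isMonicGenerator_solvableAt_mulVec (hl : Function.Injective l) (hF : F.Monic)
    (hmin : minpoly E y = F.map l) (htop : E⟮y⟯ = ⊤)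
    (hlS : ∀ p, l (linearSubst S p) =
      algebraMap (MvPolynomial (Fin m) ℤ)[X] E (MvPolynomial.finSuccEquiv ℤ m p)) :
    ∃ (P : (MvPolynomial (Fin m) ℤ)[X][X]) (y' : M), IsMonicGenerator E P y' ∧
      ∀ x, SolvableAt (MvPolynomial.eval x) F →
        SolvableAt (evalAt (Fin.tail (S.mulVec x)) (S.mulVec x 0)) P := by
  let e := MvPolynomial.finSuccEquiv ℤ m
  let μ : (MvPolynomial (Fin m) ℤ)[X] →+* MvPolynomial (Fin (m + 1)) ℤ :=
    (linearSubst S).toRingHom.comp e.symm.toRingHom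
  have l_comp_μ : l.comp μ = algebraMap (MvPolynomial (Fin m) ℤ)[X] E := RingHom.ext fun a =>
    (hlS (e.symm a)).trans (congrArg _ (e.apply_symm_apply a))
  have eval_comp_μ (x : Fin (m + 1) → ℤ) : (MvPolynomial.eval x).comp μ =
      evalAt (Fin.tail (S.mulVec x)) (S.mulVec x 0) := RingHom.ext fun a =>
    (eval_linearSubst x S _).trans <| (evalAt_finSuccEquiv _ _).symm.trans
      (congrArg _ (e.apply_symm_apply a))
  obtain ⟨P, y', hy', solvableAt_P⟩ :=
    exists_isMonicGenerator_solvableAt_comp (R := ℤ) hl l_comp_μ hF hmin htop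
  exact ⟨P, y', hy', fun x hx => eval_comp_μ x ▸ solvableAt_P _ hx⟩

lemma exists_NFB_le_of_not_isConstantlyGenerated [IsIntegrallyClosedIn ℤ M]
    (hl : Function.Injective l) (hF : F.Monic) (hmin : minpoly E y = F.map l) (htop : E⟮y⟯ = ⊤)
    (hS : S.det ≠ 0)
    (hlS : ∀ p, l (linearSubst S p) =
      algebraMap (MvPolynomial (Fin m) ℤ)[X] E (MvPolynomial.finSuccEquiv ℤ m p))
    (hM : ¬IsConstantlyGenerated (MvPolynomial (Fin m) ℤ) E M) {β : M}
    (hβ : β ∉ (algebraMap E M).range) {Q : (MvPolynomial (Fin m) ℤ)[X]} (hQ : Q ≠ 0)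
    (hQβ : aeval β (Q.map ((algebraMap (MvPolynomial (Fin m) ℤ)[X] E).comp C)) = 0) :
    ∃ C : ℝ, 0 < C ∧ ∀ B : ℝ, 1 ≤ B → (NFB F B : ℝ) ≤ C * B ^ m * Real.log (B + 2) ^ 2 := by
  let ρ : MvPolynomial (Fin m) ℤ →+* M :=
    (algebraMap E M).comp ((algebraMap (MvPolynomial (Fin m) ℤ)[X] E).comp C)
  have comp_C_injective : Function.Injective ((algebraMap (MvPolynomial (Fin m) ℤ)[X] E).comp C) :=
    (IsFractionRing.injective (MvPolynomial (Fin m) ℤ)[X] E).comp C_injective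
  have ρ_injective : Function.Injective ρ := (algebraMap E M).injective.comp comp_C_injective
  obtain ⟨P, y', hy', solvableAt_P⟩ := exists_isMonicGenerator_solvableAt_mulVec hl hF hmin htop hlS
  rw [aeval_def, eval₂_map] at hQβ
  obtain ⟨g, β', hg, hg_irr, hg_deg, hβ'⟩ := exists_monic_irreducible_of_eval₂_eq_zero ρ_injective
    (fun a b hb h => hβ ⟨_, (map_div₀ (algebraMap E M) _ _).trans
      (eq_div_of_mul_eq hb ((mul_comm _ _).trans h)).symm⟩) hQ hQβ
  have hg_bound := hasCohenBound_of_injective ρ_injective hg hg_irr hg_deg hβ'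
  rw [← eval₂_map, ← map_map] at hβ'
  obtain ⟨K, hK, card_le⟩ := hy'.exists_card_le_mul_log_sq hM hg hg_bound hβ'
  exact exists_NFB_le_of_mulVec hS solvableAt_P hK card_le

end ReducedGenerator

lemma exists_NFB_le {m : ℕ} {E M : Type*} [Field E]
    [Algebra (MvPolynomial (Fin (m + 1)) ℚ) E] [IsFractionRing (MvPolynomial (Fin (m + 1)) ℚ) E]
    [Field M] [Algebra E M] {F : (MvPolynomial (Fin (m + 1)) ℤ)[X]} (hF : F.Monic)
    (hirr : AbsIrred F) {σ : Matrix (Fin (m + 1)) (Fin (m + 1)) ℚ} (hσ : IsUnit σ.det)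
    (e : AdjoinRoot ((applyGL σ (toQ F)).map (algebraMap (MvPolynomial (Fin (m + 1)) ℚ) E)) ≃ₐ[E] M)
    {i : Fin (m + 1)}
    (hM : ∀ G : (MvPolynomial (Fin (m + 1)) ℤ)[X],
      Irreducible ((toQ G).map (algebraMap (MvPolynomial (Fin (m + 1)) ℚ) E)) →
      Nonempty (AdjoinRoot ((toQ G).map (algebraMap (MvPolynomial (Fin (m + 1)) ℚ) E)) ≃ₐ[E] M) →
      degX G i ≠ 0)
    {M' : IntermediateField E M} (hM' : M' ≠ ⊥) {G : (MvPolynomial (Fin (m + 1)) ℤ)[X]}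
    (hG : Irreducible ((toQ G).map (algebraMap (MvPolynomial (Fin (m + 1)) ℚ) E)))
    (e' : AdjoinRoot ((toQ G).map (algebraMap (MvPolynomial (Fin (m + 1)) ℚ) E)) ≃ₐ[E] M')
    (hGi : degX G i = 0) :
    ∃ C : ℝ, 0 < C ∧ ∀ B : ℝ, 1 ≤ B → (NFB F B : ℝ) ≤ C * B ^ m * Real.log (B + 2) ^ 2 := by
  have hf : (applyGL σ (toQ F)).Monic := (hF.map _).map _
  have irreducible_map := irreducible_map_applyGL hirr hσ
  have irreducible_f :=
    irreducible_map_algebraMap_of_irreducible_map (E := E) hf irreducible_map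
  obtain ⟨y, aeval_y, adjoin_y⟩ := exists_adjoin_eq_top_of_algEquiv irreducible_f e
  have hy : IsMonicGenerator E (applyGL σ (toQ F)) y :=
    ⟨hf, (minpoly.eq_of_irreducible_of_monic irreducible_f aeval_y (hf.map _)).symm, adjoin_y⟩
  have := hy.isIntegrallyClosedIn_int irreducible_map
  obtain ⟨θ, aeval_θ, adjoin_θ⟩ := exists_adjoin_eq_top_of_algEquiv hG e'
  have aeval_coe_θ : aeval (θ : M) ((toQ G).map (algebraMap _ E)) = 0 := by
    rw [← IntermediateField.coe_val, aeval_algHom_apply, aeval_θ, map_zero]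
  obtain ⟨S, N, _, hS, hN, _, hlS, hX⟩ := exists_isFractionRing_linearSubst (E := E) hσ i
  have := (faithfulSMul_iff_algebraMap_injective (MvPolynomial (Fin m) ℤ)[X] E).2
    (IsFractionRing.injective _ E)
  obtain ⟨Q, hQ, aeval_Q⟩ :=
    exists_ne_zero_aeval_map_eq_zero_of_degX_eq_zero hN hX hGi hG.ne_zero aeval_coe_θ
  exact exists_NFB_le_of_not_isConstantlyGenerated (substHom_injective hσ) hF
    (hy.minpoly_eq.trans (map_algebraMap_applyGL σ F)) adjoin_y hS hlS
    (not_isConstantlyGenerated hX hM) (coe_notMem_range_of_adjoin_eq_top hM' adjoin_θ) hQ aeval_Q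

theorem statement3 (n : ℕ) (hn : 2 ≤ n) :
    ∃ e : ℕ, 1 ≤ e ∧
      ∀ F : Polynomial (MvPolynomial (Fin n) ℤ),
        2 ≤ F.natDegree → IsAllowable F → ¬ IsStronglyAllowable F →
        ∃ C : ℝ, 0 < C ∧ ∀ B : ℝ, 1 ≤ B →
          (NFB F B : ℝ) ≤ C * B ^ (n - 1) * Real.log (B + 2) ^ e := by
  refine ⟨2, one_le_two, fun F _ ⟨hirr, hmonic, genuine⟩ hF => ?_⟩
  obtain ⟨σ, hσ, not_strongly⟩ : ∃ σ : Matrix (Fin n) (Fin n) ℚ,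
      IsUnit σ.det ∧ ¬StronglyGenuineExtOfQ (applyGL σ (toQ F)) := by
    by_contra! strongly
    exact hF ⟨hirr, hmonic, strongly⟩
  simp only [StronglyGenuineExtOfQ, IsStronglyGenuineExt, IsGenuineExt, not_forall] at not_strongly
  obtain ⟨M, _, _, ⟨e⟩, M', hM', G, hG, ⟨e'⟩, not_allPosDeg⟩ := not_strongly
  obtain ⟨i, hGi⟩ : ∃ i, degX G i = 0 := by
    by_contra! degX_ne_zero
    exact not_allPosDeg ⟨hG.natDegree_pos.trans_le (natDegree_map_le.trans natDegree_map_le),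
      fun i => Nat.pos_of_ne_zero (degX_ne_zero i)⟩
  obtain ⟨m, rfl⟩ := Nat.exists_eq_add_of_le' (one_le_two.trans hn)
  exact exists_NFB_le hmonic hirr hσ e
    (fun G hG ⟨f⟩ => ((genuine σ hσ G hG ⟨f.trans e.symm⟩).2 i).ne') hM' hG e' hGi
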